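/- arXiv:1808.01273 — 2 statements merged into one kernel-verified Lean document; each statement's English description precedes it below -/
import Mathlib

section
/- There exists a universal constant C > 0 such that for every integer k ≥ 1, every 0 < p < ∞, and every polynomial P on ℝ^k, one has ‖∇P‖_{L^p(γ_k)} ≤ C · (deg P)/√(p+1) · ‖P‖_{L^p(γ_k)}. -/
open MeasureTheory ProbabilityTheory Real

/-- The standard Gaussian measure on `ℝ^k`. -/
noncomputable def gaussMeasure (k : ℕ) : Measure (Fin k → ℝ) :=
  Measure.pi fun _ => gaussianReal 0 1

/-- The `L^p` norm with respect to the standard Gaussian measure on `ℝ^k`. -/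
noncomputable def lpNormGauss {k : ℕ} (p : ℝ) (f : (Fin k → ℝ) → ℝ) : ℝ :=
  (∫ x, |f x| ^ p ∂(gaussMeasure k)) ^ (1 / p)

/-- The Euclidean length of the gradient of a polynomial on `ℝ^k`. -/
noncomputable def gradNorm {k : ℕ} (P : MvPolynomial (Fin k) ℝ) (x : Fin k → ℝ) : ℝ :=
  Real.sqrt (∑ j, (MvPolynomial.eval x (MvPolynomial.pderiv j P)) ^ 2)

/-!
Along the ellipse `cos θ • x + sin θ • y`, a polynomial `P` of degree `n` is a trigonometric
polynomial of degree `n`, so Bernstein's inequality in `L^p(dθ)` bounds its angular derivative. For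
independent Gaussian vectors `x` and `y`, the pair formed by a point of the ellipse and its tangent
vector has, for every `θ`, the law of `(x, y)`. Averaging over `x`, `y` and `θ` therefore gives
`E |∇P(x) · y| ^ p ≤ n ^ p * E |P(x)| ^ p`, and the left-hand side is `E |∇P| ^ p` times the `p`-th
absolute moment of a standard Gaussian variable `t`. The `L^p` norm of `t` is at least of order
`√(p + 1)`: rescaling the variance to `1 / (p + 1)` extracts this factor and leaves at least the
norm of `t * exp (-t ^ 2 / 2)`, which Jensen's inequality bounds below independently of `p`.

Bernstein's inequality is needed with constant `n` for all `p > 0`, also below `1`, and follows from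
an inequality of Mahler measures, as discovered by Arestov. Reflecting the roots of `q` into the
closed unit disk changes `|q|` on the circle only by a constant factor and does not decrease
`|Λ q|`, where `Λ` is the angular derivative; for roots in the disk, Gauss–Lucas localises the roots
of `Λ q` and makes both Mahler measures explicit. By Jensen's formula `log⁺ |q|` is the average of
`log |q - w|` over the unit circle, so the inequality passes to `log⁺`, and `s ^ p` is a positive
superposition of the functions `log⁺ (c * s)`.
-/

section CirclePolynomial

open Polynomial

/-- The reflection `1 / conj w` in the unit circle, applied only to points outside the closed unit
disk. -/
noncomputable def diskReflection (w : ℂ) : ℂ :=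
  if ‖w‖ ≤ 1 then w else (starRingEnd ℂ w)⁻¹

lemma norm_diskReflection_le_one (w : ℂ) : ‖diskReflection w‖ ≤ 1 := by
  unfold diskReflection
  split_ifs with hw
  · exact hw
  · rw [norm_inv, Complex.norm_conj]
    exact inv_le_one_of_one_le₀ (not_le.mp hw).le

lemma sub_inv_conj_eq {z w : ℂ} (hz : ‖z‖ = 1) (hw : w ≠ 0) :
    z - (starRingEnd ℂ w)⁻¹ = -(z * (starRingEnd ℂ w)⁻¹ * starRingEnd ℂ (z - w)) := by
  have hzz : z * starRingEnd ℂ z = 1 := by simp [Complex.mul_conj', hz]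
  have hw' : starRingEnd ℂ w ≠ 0 := by simpa using hw
  rw [map_sub]
  field_simp
  linear_combination hzz

lemma herglotzRieszKernel_inv_conj {z w : ℂ} (hz : ‖z‖ = 1) (hw : w ≠ 0) :
    herglotzRieszKernel 0 (starRingEnd ℂ w)⁻¹ z = -starRingEnd ℂ (herglotzRieszKernel 0 w z) := by
  have hz₀ : z ≠ 0 := norm_ne_zero_iff.mp (hz ▸ one_ne_zero)
  have hw' : (starRingEnd ℂ w)⁻¹ ≠ 0 := by simpa using hw
  have hadd : z + (starRingEnd ℂ w)⁻¹ = z * (starRingEnd ℂ w)⁻¹ * starRingEnd ℂ (z + w) := by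
    simpa [sub_eq_add_neg] using sub_inv_conj_eq hz (neg_ne_zero.mpr hw)
  simp only [herglotzRieszKernel_def, sub_zero]
  rw [hadd, sub_inv_conj_eq hz hw, div_neg, mul_div_mul_left _ _ (mul_ne_zero hz₀ hw'), map_div₀]

lemma norm_sub_eq_max_mul_norm_sub_diskReflection {z : ℂ} (hz : ‖z‖ = 1) (w : ℂ) :
    ‖z - w‖ = max 1 ‖w‖ * ‖z - diskReflection w‖ := by
  unfold diskReflection
  split_ifs with hw
  · rw [max_eq_left hw, one_mul]
  · have hw₁ : 1 ≤ ‖w‖ := (not_le.mp hw).le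
    have hw₀ : ‖w‖ ≠ 0 := by positivity
    rw [sub_inv_conj_eq hz (norm_ne_zero_iff.mp hw₀), max_eq_right hw₁, norm_neg, norm_mul,
      norm_mul, norm_inv, Complex.norm_conj, Complex.norm_conj, hz, one_mul,
      mul_inv_cancel_left₀ hw₀]

lemma re_herglotzRieszKernel (w z : ℂ) :
    (herglotzRieszKernel 0 w z).re = (‖z‖ ^ 2 - ‖w‖ ^ 2) / ‖z - w‖ ^ 2 := by
  simpa [poissonKernel_def] using
    (congrFun (poissonKernel_eq_re_herglotzRieszKernel (c := 0) (w := w)) z).symm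

lemma re_herglotzRieszKernel_diskReflection {z : ℂ} (hz : ‖z‖ = 1) (w : ℂ) :
    (herglotzRieszKernel 0 (diskReflection w) z).re = |(herglotzRieszKernel 0 w z).re| := by
  have hre := re_herglotzRieszKernel w z
  rw [hz, one_pow] at hre
  unfold diskReflection
  split_ifs with hw
  · refine (abs_of_nonneg ?_).symm
    rw [hre]
    exact div_nonneg (sub_nonneg.mpr (pow_le_one₀ (norm_nonneg w) hw)) (by positivity)
  · have hw₁ : 1 ≤ ‖w‖ := (not_le.mp hw).le
    rw [herglotzRieszKernel_inv_conj hz (norm_pos_iff.mp (one_pos.trans_le hw₁)), Complex.neg_re,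
      Complex.conj_re, abs_of_nonpos]
    rw [hre]
    exact div_nonpos_of_nonpos_of_nonneg (sub_nonpos.mpr (one_le_pow₀ hw₁)) (by positivity)

lemma im_herglotzRieszKernel_diskReflection {z : ℂ} (hz : ‖z‖ = 1) (w : ℂ) :
    (herglotzRieszKernel 0 (diskReflection w) z).im = (herglotzRieszKernel 0 w z).im := by
  unfold diskReflection
  split_ifs with hw
  · rfl
  · rw [herglotzRieszKernel_inv_conj hz (norm_pos_iff.mp (one_pos.trans (not_le.mp hw))),
      Complex.neg_im, Complex.conj_im, neg_neg]

lemma norm_add_sum_herglotzRieszKernel_le {z : ℂ} (hz : ‖z‖ = 1) {a : ℝ} (ha : 0 ≤ a)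
    (s : Multiset ℂ) :
    ‖a + (s.map (herglotzRieszKernel 0 · z)).sum‖ ≤
      ‖a + ((s.map diskReflection).map (herglotzRieszKernel 0 · z)).sum‖ := by
  have him : (a + (s.map (herglotzRieszKernel 0 · z)).sum).im =
      (a + ((s.map diskReflection).map (herglotzRieszKernel 0 · z)).sum).im := by
    induction s using Multiset.induction_on with
    | empty => simp
    | cons w s ih =>
      simp only [Multiset.map_cons, Multiset.sum_cons, Complex.add_im,
        im_herglotzRieszKernel_diskReflection hz] at ih ⊢
      linarith
  have hre : |(a + (s.map (herglotzRieszKernel 0 · z)).sum).re| ≤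
      (a + ((s.map diskReflection).map (herglotzRieszKernel 0 · z)).sum).re := by
    clear him
    induction s using Multiset.induction_on with
    | empty => simp [abs_of_nonneg ha]
    | cons w s ih =>
      simp only [Multiset.map_cons, Multiset.sum_cons, Complex.add_re,
        re_herglotzRieszKernel_diskReflection hz] at ih ⊢
      rw [add_left_comm (a : ℂ).re, add_left_comm (a : ℂ).re]
      exact (abs_add_le _ _).trans (by gcongr)
  refine (sq_le_sq₀ (norm_nonneg _) (norm_nonneg _)).mp ?_
  rw [← Complex.normSq_eq_norm_sq, ← Complex.normSq_eq_norm_sq, Complex.normSq_apply,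
    Complex.normSq_apply, him]
  gcongr ?_ + _
  exact abs_le_iff_mul_self_le.mp (hre.trans (le_abs_self _))

/-- The polynomial `Λ q = X q' - α q`. It encodes differentiation in the angle of functions on the
circle: `exp (-iαθ) q (exp (iθ))` has derivative `i exp (-iαθ) (Λ q) (exp (iθ))`. -/
noncomputable def angularDeriv (α : ℝ) (q : ℂ[X]) : ℂ[X] :=
  X * derivative q - C (α : ℂ) * q

lemma angularDeriv_C_mul (α : ℝ) (c : ℂ) (q : ℂ[X]) :
    angularDeriv α (C c * q) = C c * angularDeriv α q := by
  simp only [angularDeriv, derivative_C_mul]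
  ring

lemma coeff_angularDeriv (α : ℝ) (q : ℂ[X]) (m : ℕ) :
    (angularDeriv α q).coeff m = (m - α) * q.coeff m := by
  rw [angularDeriv, coeff_sub, coeff_C_mul]
  cases m with
  | zero => simp
  | succ m =>
    rw [coeff_X_mul, coeff_derivative]
    push_cast
    ring

lemma natDegree_angularDeriv_le (α : ℝ) (q : ℂ[X]) :
    (angularDeriv α q).natDegree ≤ q.natDegree :=
  natDegree_le_iff_coeff_eq_zero.mpr fun m hm => by
    rw [coeff_angularDeriv, coeff_eq_zero_of_natDegree_lt hm, mul_zero]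

lemma eval_angularDeriv_of_ne_zero (α : ℝ) {q : ℂ[X]} {z : ℂ} (hz : q.eval z ≠ 0) :
    (angularDeriv α q).eval z =
      q.eval z * (((q.natDegree - 2 * α : ℝ) +
        (q.roots.map (herglotzRieszKernel 0 · z)).sum) / 2) := by
  have hsplits := IsAlgClosed.splits q
  have hsum : (q.roots.map (herglotzRieszKernel 0 · z)).sum =
      2 * z * (q.roots.map fun w => 1 / (z - w)).sum - q.natDegree := by
    have hkernel : ∀ w ∈ q.roots, herglotzRieszKernel 0 w z = 2 * z * (1 / (z - w)) - 1 := by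
      intro w hw
      have hzw : z - w ≠ 0 := sub_ne_zero.mpr fun h => hz (h ▸ isRoot_of_mem_roots hw)
      rw [herglotzRieszKernel_def, sub_zero, sub_zero]
      field_simp
      ring
    rw [Multiset.map_congr rfl hkernel, Multiset.sum_map_sub, Multiset.sum_map_mul_left]
    simp [hsplits.natDegree_eq_card_roots]
  rw [hsum, ← hsplits.eval_derivative_div_eval_of_ne_zero hz]
  simp only [angularDeriv, eval_sub, eval_mul, eval_X, eval_C]
  push_cast
  field_simp
  ring

lemma circleAverage_mono_of_countable {c : ℂ} {R : ℝ} (hR : R ≠ 0) {f g : ℂ → ℝ}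
    (hf : CircleIntegrable f c R) (hg : CircleIntegrable g c R) {s : Set ℂ} (hs : s.Countable)
    (hfg : ∀ z ∈ Metric.sphere c |R|, z ∉ s → f z ≤ g z) :
    circleAverage f c R ≤ circleAverage g c R := by
  refine smul_le_smul_of_nonneg_left ?_ (by positivity)
  refine intervalIntegral.integral_mono_ae two_pi_pos.le hf hg ?_
  filter_upwards [(hs.preimage_circleMap c hR).ae_notMem volume] with θ hθ
  exact hfg _ (circleMap_mem_sphere' c R θ) hθ

lemma mahlerMeasure_le_of_norm_eval_le {p q : ℂ[X]} (hq : q ≠ 0) {s : Set ℂ} (hs : s.Countable)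
    (hpq : ∀ z : ℂ, ‖z‖ = 1 → z ∉ s → ‖p.eval z‖ ≤ ‖q.eval z‖) :
    p.mahlerMeasure ≤ q.mahlerMeasure := by
  rcases eq_or_ne p 0 with rfl | hp
  · exact mahlerMeasure_zero.trans_le (mahlerMeasure_nonneg q)
  rw [← log_le_log_iff (mahlerMeasure_pos_of_ne_zero hp) (mahlerMeasure_pos_of_ne_zero hq),
    ← logMahlerMeasure_eq_log_MahlerMeasure, ← logMahlerMeasure_eq_log_MahlerMeasure,
    logMahlerMeasure_def, logMahlerMeasure_def]
  refine circleAverage_mono_of_countable one_ne_zero (intervalIntegrable_mahlerMeasure p)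
    (intervalIntegrable_mahlerMeasure q) (hs.union p.roots.toFinset.countable_toSet)
    fun z hz hzs => ?_
  have hpz : p.eval z ≠ 0 := fun h => hzs (Or.inr (by simpa [hp] using h))
  exact log_le_log (norm_pos_iff.mpr hpz)
    (hpq z (by simpa using hz) fun h => hzs (Or.inl h))

/-- The monic polynomial whose roots are those of `q`, with the roots outside the closed unit disk
reflected into it. On the unit circle its modulus is proportional to that of `q`. -/
noncomputable def rootReflection (q : ℂ[X]) : ℂ[X] :=
  ((q.roots.map diskReflection).map fun w => X - C w).prod

lemma monic_rootReflection (q : ℂ[X]) : (rootReflection q).Monic :=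
  monic_multiset_prod_of_monic _ _ fun w _ => monic_X_sub_C w

lemma roots_rootReflection (q : ℂ[X]) :
    (rootReflection q).roots = q.roots.map diskReflection :=
  roots_multiset_prod_X_sub_C _

lemma natDegree_rootReflection (q : ℂ[X]) : (rootReflection q).natDegree = q.natDegree := by
  rw [rootReflection, natDegree_multiset_prod_X_sub_C_eq_card, Multiset.card_map,
    (IsAlgClosed.splits q).natDegree_eq_card_roots]

lemma norm_le_one_of_mem_roots_rootReflection {q : ℂ[X]} {w : ℂ}
    (hw : w ∈ (rootReflection q).roots) : ‖w‖ ≤ 1 := by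
  rw [roots_rootReflection] at hw
  obtain ⟨v, -, rfl⟩ := Multiset.mem_map.mp hw
  exact norm_diskReflection_le_one v

lemma norm_eval_eq_mahlerMeasure_mul (q : ℂ[X]) {z : ℂ} (hz : ‖z‖ = 1) :
    ‖q.eval z‖ = q.mahlerMeasure * ‖(rootReflection q).eval z‖ := by
  rw [mahlerMeasure_eq_leadingCoeff_mul_prod_roots, (IsAlgClosed.splits q).eval_eq_prod_roots,
    norm_mul, mul_assoc, rootReflection, eval_multiset_prod, Multiset.map_map, Multiset.map_map]
  congr 1
  simp only [Function.comp_def, eval_sub, eval_X, eval_C]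
  generalize q.roots = s
  induction s using Multiset.induction_on with
  | empty => simp
  | cons w s ih =>
    rw [Multiset.map_cons, Multiset.map_cons, Multiset.map_cons, Multiset.prod_cons,
      Multiset.prod_cons, Multiset.prod_cons, norm_mul, norm_mul, ih,
      norm_sub_eq_max_mul_norm_sub_diskReflection hz w]
    ring

lemma mahlerMeasure_eq_norm_leadingCoeff {q : ℂ[X]} (hq : ∀ w ∈ q.roots, ‖w‖ ≤ 1) :
    q.mahlerMeasure = ‖q.leadingCoeff‖ := by
  rw [mahlerMeasure_eq_leadingCoeff_mul_prod_roots, Multiset.prod_eq_one, mul_one]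
  intro r hr
  obtain ⟨w, hw, rfl⟩ := Multiset.mem_map.mp hr
  exact max_eq_left (hq w hw)

lemma sum_re_herglotzRieszKernel_pos {s : Multiset ℂ} (hs₀ : s ≠ 0) (hs : ∀ w ∈ s, ‖w‖ ≤ 1)
    {z : ℂ} (hz : 1 < ‖z‖) : 0 < (s.map (herglotzRieszKernel 0 · z)).sum.re := by
  have hkernel : ∀ w ∈ s, 0 < (herglotzRieszKernel 0 w z).re := by
    intro w hw
    have hwz : ‖w‖ < ‖z‖ := (hs w hw).trans_lt hz
    have hzw : 0 < ‖z - w‖ := norm_sub_pos_iff.mpr (by rintro rfl; exact hwz.false)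
    rw [re_herglotzRieszKernel]
    exact div_pos (sub_pos.mpr (by gcongr)) (by positivity)
  calc 0 = (s.map fun _ => (0 : ℝ)).sum := Multiset.sum_map_zero.symm
    _ < (s.map fun w => (herglotzRieszKernel 0 w z).re).sum :=
      Multiset.sum_lt_sum_of_nonempty hs₀ hkernel
    _ = _ := by
      simpa using (map_multiset_sum Complex.reAddGroupHom (s.map (herglotzRieszKernel 0 · z))).symm

lemma norm_le_one_of_mem_roots_angularDeriv {α : ℝ} {q : ℂ[X]} (hα : 2 * α ≤ q.natDegree)
    (hq₀ : q.natDegree ≠ 0) (hq : ∀ w ∈ q.roots, ‖w‖ ≤ 1) {z : ℂ}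
    (hz : z ∈ (angularDeriv α q).roots) : ‖z‖ ≤ 1 := by
  by_contra! hz₁
  have hqz : q.eval z ≠ 0 := fun h =>
    hz₁.not_ge (hq z ((mem_roots (ne_zero_of_natDegree_gt (Nat.pos_of_ne_zero hq₀))).mpr h))
  have hroots : q.roots ≠ 0 := by
    rwa [← Multiset.card_eq_zero.ne, ← (IsAlgClosed.splits q).natDegree_eq_card_roots]
  have hzero := isRoot_of_mem_roots hz
  rw [IsRoot.def, eval_angularDeriv_of_ne_zero α hqz, mul_eq_zero, or_iff_right hqz,
    div_eq_zero_iff, or_iff_left two_ne_zero] at hzero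
  have hre := congrArg Complex.re hzero
  rw [Complex.add_re, Complex.ofReal_re, Complex.zero_re] at hre
  linarith [sum_re_herglotzRieszKernel_pos hroots hq hz₁]

lemma mahlerMeasure_angularDeriv_of_roots_mem_closedBall {α : ℝ} {q : ℂ[X]}
    (hα : 2 * α ≤ q.natDegree) (hq₀ : q.natDegree ≠ 0) (hq : ∀ w ∈ q.roots, ‖w‖ ≤ 1) :
    (angularDeriv α q).mahlerMeasure = (q.natDegree - α) * ‖q.leadingCoeff‖ := by
  have hαN : 0 < (q.natDegree : ℝ) - α := by
    have : (0 : ℝ) < q.natDegree := Nat.cast_pos.mpr (Nat.pos_of_ne_zero hq₀)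
    linarith
  have hcoeff : (angularDeriv α q).coeff q.natDegree =
      ((q.natDegree - α : ℝ) : ℂ) * q.leadingCoeff := by
    rw [coeff_angularDeriv, leadingCoeff, Complex.ofReal_sub, Complex.ofReal_natCast]
  have hdeg : (angularDeriv α q).natDegree = q.natDegree := by
    refine natDegree_eq_of_le_of_coeff_ne_zero (natDegree_angularDeriv_le α q) ?_
    rw [hcoeff]
    exact mul_ne_zero (Complex.ofReal_ne_zero.mpr hαN.ne') (leadingCoeff_ne_zero.mpr
      (ne_zero_of_natDegree_gt (Nat.pos_of_ne_zero hq₀)))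
  rw [mahlerMeasure_eq_norm_leadingCoeff fun w hw =>
      norm_le_one_of_mem_roots_angularDeriv hα hq₀ hq hw, leadingCoeff, hdeg, hcoeff, norm_mul,
    Complex.norm_of_nonneg hαN.le]

lemma norm_eval_angularDeriv_le {α : ℝ} {q : ℂ[X]} (hα : 2 * α ≤ q.natDegree) {z : ℂ}
    (hz : ‖z‖ = 1) (hqz : q.eval z ≠ 0) :
    ‖(angularDeriv α q).eval z‖ ≤
      q.mahlerMeasure * ‖(angularDeriv α (rootReflection q)).eval z‖ := by
  have hRz : (rootReflection q).eval z ≠ 0 := fun h =>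
    hqz (by simpa [h] using norm_eval_eq_mahlerMeasure_mul q hz)
  rw [eval_angularDeriv_of_ne_zero α hqz, eval_angularDeriv_of_ne_zero α hRz, roots_rootReflection,
    natDegree_rootReflection, norm_mul, norm_mul, norm_eval_eq_mahlerMeasure_mul q hz, mul_assoc,
    norm_div, norm_div]
  gcongr
  · exact mahlerMeasure_nonneg q
  · exact norm_add_sum_herglotzRieszKernel_le hz (sub_nonneg.mpr hα) _

lemma mahlerMeasure_angularDeriv_le {α : ℝ} {q : ℂ[X]} (hα : 2 * α ≤ q.natDegree) :
    (angularDeriv α q).mahlerMeasure ≤ (q.natDegree - α) * q.mahlerMeasure := by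
  rcases eq_or_ne q.natDegree 0 with hq₀ | hq₀
  · obtain ⟨c, rfl⟩ := natDegree_eq_zero.mp hq₀
    have hα₀ : α ≤ 0 := by
      rw [hq₀, Nat.cast_zero] at hα
      linarith
    have hΛ : angularDeriv α (C c) = C ((-α : ℝ) * c) := by simp [angularDeriv]
    rw [hΛ, mahlerMeasure_const, mahlerMeasure_const, norm_mul,
      Complex.norm_of_nonneg (neg_nonneg.mpr hα₀), hq₀, Nat.cast_zero, zero_sub]
  have hq : q ≠ 0 := ne_zero_of_natDegree_gt (Nat.pos_of_ne_zero hq₀)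
  have hMq : 0 < q.mahlerMeasure := mahlerMeasure_pos_of_ne_zero hq
  have hαN : 0 < (q.natDegree : ℝ) - α := by
    have : (0 : ℝ) < q.natDegree := Nat.cast_pos.mpr (Nat.pos_of_ne_zero hq₀)
    linarith
  have hR := mahlerMeasure_angularDeriv_of_roots_mem_closedBall
    ((natDegree_rootReflection q).symm ▸ hα) ((natDegree_rootReflection q).symm ▸ hq₀)
    fun w => norm_le_one_of_mem_roots_rootReflection
  rw [natDegree_rootReflection, (monic_rootReflection q).leadingCoeff, norm_one, mul_one] at hR
  calc (angularDeriv α q).mahlerMeasure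
      ≤ (C (q.mahlerMeasure : ℂ) * angularDeriv α (rootReflection q)).mahlerMeasure := by
        refine mahlerMeasure_le_of_norm_eval_le ?_ q.roots.toFinset.countable_toSet
          fun z hz hzq => ?_
        · rw [← (mahlerMeasure_eq_zero_iff _).ne, mahlerMeasure_mul, mahlerMeasure_const, hR,
            Complex.norm_of_nonneg hMq.le]
          exact (mul_pos hMq hαN).ne'
        · rw [eval_mul, eval_C, norm_mul, Complex.norm_of_nonneg hMq.le]
          exact norm_eval_angularDeriv_le hα hz (by simpa [hq] using hzq)
    _ = (q.natDegree - α) * q.mahlerMeasure := by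
        rw [mahlerMeasure_mul, mahlerMeasure_const, hR, Complex.norm_of_nonneg hMq.le, mul_comm]

lemma circleAverage_log_norm_eval_div_sub (q : ℂ[X]) (N : ℕ) (a : ℂ) :
    circleAverage (fun z => log ‖q.eval z / z ^ N - a‖) 0 1 =
      (q - C a * X ^ N).logMahlerMeasure := by
  rw [logMahlerMeasure_def]
  refine circleAverage_congr_sphere fun z hz => ?_
  have hz₁ : ‖z‖ = 1 := by simpa using hz
  have hzN : z ^ N ≠ 0 := pow_ne_zero N (norm_ne_zero_iff.mp (hz₁ ▸ one_ne_zero))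
  simp only [eval_sub, eval_mul, eval_C, eval_pow, eval_X]
  rw [div_sub' hzN, norm_div, norm_pow, hz₁, one_pow, div_one, mul_comm]

lemma meromorphic_eval_div_pow (q : ℂ[X]) (N : ℕ) :
    Meromorphic fun z : ℂ => q.eval z / z ^ N := fun z =>
  (q.differentiable.analyticAt z).meromorphicAt.div (analyticAt_id.pow N).meromorphicAt

-- Jensen's formula `log⁺ |u| = average of log |u - a| over |a| = 1` at each point of the circle.
lemma circleAverage_logMahlerMeasure_sub_C_mul_X_pow (q : ℂ[X]) (N : ℕ) :
    circleAverage (fun a => (q - C a * X ^ N).logMahlerMeasure) 0 1 =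
      circleAverage (fun z => log⁺ ‖q.eval z‖) 0 1 := by
  have h := congrFun (ValueDistribution.circleAverage_circleAverage_eq_proximity_top
    (meromorphic_eval_div_pow q N)) 1
  simp only [circleAverage_log_norm_eval_div_sub] at h
  rw [h, ValueDistribution.proximity_top]
  refine circleAverage_congr_sphere fun z hz => ?_
  have hz₁ : ‖z‖ = 1 := by simpa using hz
  simp [hz₁]

lemma circleIntegrable_logMahlerMeasure_sub_C_mul_X_pow (q : ℂ[X]) (N : ℕ) :
    CircleIntegrable (fun a => (q - C a * X ^ N).logMahlerMeasure) 0 1 := by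
  simpa only [circleAverage_log_norm_eval_div_sub] using
    ValueDistribution.circleIntegrable_circleAverage_log_norm_sub (R := 1)
      (meromorphic_eval_div_pow q N)

lemma logMahlerMeasure_angularDeriv_sub_le {α : ℝ} {N : ℕ} (hα : 2 * α ≤ N) (hαN : α < N)
    {q : ℂ[X]} (hq : q.natDegree ≤ N) {a : ℂ} (ha : a ≠ q.coeff N) :
    (C ((N - α : ℝ) : ℂ)⁻¹ * angularDeriv α q - C a * X ^ N).logMahlerMeasure ≤
      (q - C a * X ^ N).logMahlerMeasure := by
  set r : ℂ[X] := q - C a * X ^ N with hr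
  have hpos : 0 < (N - α : ℝ) := sub_pos.mpr hαN
  have hpos' : ((N - α : ℝ) : ℂ) ≠ 0 := Complex.ofReal_ne_zero.mpr hpos.ne'
  have hcoeff : r.coeff N ≠ 0 := by simpa [hr, sub_eq_zero] using ha.symm
  have hdeg : r.natDegree = N := natDegree_eq_of_le_of_coeff_ne_zero
    (natDegree_sub_le_of_le hq (natDegree_C_mul_X_pow_le a N) |>.trans (max_self N).le) hcoeff
  have hΛr : C ((N - α : ℝ) : ℂ)⁻¹ * angularDeriv α q - C a * X ^ N =
      C ((N - α : ℝ) : ℂ)⁻¹ * angularDeriv α r := by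
    ext m
    simp only [hr, coeff_sub, coeff_C_mul, coeff_angularDeriv, coeff_X_pow]
    split_ifs with hm
    · subst hm
      push_cast at hpos' ⊢
      field_simp
    · ring
  have hle : (C ((N - α : ℝ) : ℂ)⁻¹ * angularDeriv α r).mahlerMeasure ≤ r.mahlerMeasure := by
    rw [mahlerMeasure_mul, mahlerMeasure_const, norm_inv, Complex.norm_of_nonneg hpos.le,
      inv_mul_le_iff₀ hpos, ← hdeg]
    exact mahlerMeasure_angularDeriv_le (hdeg.symm ▸ hα)
  have hΛr₀ : C ((N - α : ℝ) : ℂ)⁻¹ * angularDeriv α r ≠ 0 := by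
    refine fun h => mul_ne_zero hpos' hcoeff ?_
    simpa [coeff_angularDeriv, hpos'] using congrArg (coeff · N) h
  rw [hΛr, logMahlerMeasure_eq_log_MahlerMeasure, logMahlerMeasure_eq_log_MahlerMeasure]
  exact log_le_log (mahlerMeasure_pos_of_ne_zero hΛr₀) hle

lemma circleAverage_posLog_angularDeriv_le {α : ℝ} {N : ℕ} (hα : 2 * α ≤ N) (hαN : α < N)
    {q : ℂ[X]} (hq : q.natDegree ≤ N) :
    circleAverage (fun z => log⁺ ‖(C ((N - α : ℝ) : ℂ)⁻¹ * angularDeriv α q).eval z‖) 0 1 ≤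
      circleAverage (fun z => log⁺ ‖q.eval z‖) 0 1 := by
  rw [← circleAverage_logMahlerMeasure_sub_C_mul_X_pow _ N,
    ← circleAverage_logMahlerMeasure_sub_C_mul_X_pow _ N]
  exact circleAverage_mono_of_countable one_ne_zero
    (circleIntegrable_logMahlerMeasure_sub_C_mul_X_pow _ N)
    (circleIntegrable_logMahlerMeasure_sub_C_mul_X_pow q N)
    (Set.countable_singleton (q.coeff N)) fun a _ ha =>
      logMahlerMeasure_angularDeriv_sub_le hα hαN hq ha

end CirclePolynomial

section LayerCake

lemma lintegral_max_zero_mul_exp_neg {p : ℝ} (hp : 0 < p) :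
    ∫⁻ t : ℝ, ENNReal.ofReal (max 0 t * exp (-(p * t))) = ENNReal.ofReal ((1 / p) ^ 2) := by
  have hGamma : ∫ t in Set.Ioi (0 : ℝ), t * exp (-(p * t)) = (1 / p) ^ 2 := by
    have h := integral_rpow_mul_exp_neg_mul_Ioi two_pos hp
    norm_num [Gamma_two] at h ⊢
    exact h
  have hint : IntegrableOn (fun t : ℝ => t * exp (-(p * t))) (Set.Ioi 0) :=
    not_imp_comm.mp integral_undef (hGamma.trans_ne (by positivity))
  rw [← hGamma, ofReal_integral_eq_lintegral_ofReal hint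
    ((ae_restrict_mem measurableSet_Ioi).mono fun t ht => mul_nonneg (le_of_lt ht) (exp_pos _).le),
    ← lintegral_indicator measurableSet_Ioi]
  congr 1 with t
  rcases le_or_gt t 0 with ht | ht
  · simp [ht]
  · simp [ht, ht.le]

lemma lintegral_posLog_exp_mul_norm {E : Type*} [NormedAddGroup E] {p : ℝ} (hp : 0 < p) (v : E) :
    ∫⁻ t : ℝ, ENNReal.ofReal (log⁺ (exp t * ‖v‖)) * ENNReal.ofReal (exp (-(p * t))) =
      ENNReal.ofReal ((1 / p) ^ 2) * ‖v‖ₑ ^ p := by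
  rcases (norm_nonneg v).eq_or_lt with hv | hv
  · have hv' : ‖v‖ₑ = 0 := by rw [← ofReal_norm, ← hv, ENNReal.ofReal_zero]
    simp [← hv, hv', ENNReal.zero_rpow_of_pos hp]
  rw [← lintegral_max_zero_mul_exp_neg hp, ← lintegral_mul_const' _ _ (by finiteness),
    ← lintegral_sub_right_eq_self _ (log ‖v‖)]
  congr 1 with t
  have hlog : log⁺ (exp (t - log ‖v‖) * ‖v‖) = max 0 t := by
    rw [exp_sub, exp_log hv, div_mul_cancel₀ _ hv.ne', posLog_apply, log_exp]
  have hexp : exp (-(p * (t - log ‖v‖))) = exp (-(p * t)) * ‖v‖ ^ p := by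
    rw [rpow_def_of_pos hv, ← exp_add]
    ring_nf
  rw [hlog, hexp, ← ofReal_norm, ENNReal.ofReal_rpow_of_pos hv,
    ← ENNReal.ofReal_mul (le_max_left 0 t), ← ENNReal.ofReal_mul (by positivity), mul_assoc]

variable {α E F : Type*} [MeasurableSpace α] {μ : Measure α} [SFinite μ] [NormedAddCommGroup E]
  [NormedAddCommGroup F]

lemma lintegral_lintegral_posLog_exp_mul_norm {f : α → E} (hf : AEStronglyMeasurable f μ) {p : ℝ}
    (hp : 0 < p) :
    ∫⁻ t : ℝ, (∫⁻ x, ENNReal.ofReal (log⁺ (exp t * ‖f x‖)) ∂μ) * ENNReal.ofReal (exp (-(p * t))) =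
      ENNReal.ofReal ((1 / p) ^ 2) * ∫⁻ x, ‖f x‖ₑ ^ p ∂μ := by
  have hmeas : AEMeasurable (fun z : ℝ × α => ENNReal.ofReal (log⁺ (exp z.1 * ‖f z.2‖)) *
      ENNReal.ofReal (exp (-(p * z.1)))) (volume.prod μ) := by
    have hnorm : AEMeasurable (fun z : ℝ × α => ‖f z.2‖) (volume.prod μ) :=
      hf.norm.aemeasurable.comp_snd
    exact (continuous_posLog.measurable.comp_aemeasurable
      (measurable_fst.exp.aemeasurable.mul hnorm)).ennreal_ofReal.mul (by fun_prop)
  simp_rw [← lintegral_const_mul' _ _ ENNReal.ofReal_ne_top,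
    ← lintegral_mul_const' _ _ ENNReal.ofReal_ne_top, ← lintegral_posLog_exp_mul_norm hp]
  exact lintegral_lintegral_swap hmeas

lemma lintegral_enorm_rpow_le_of_lintegral_posLog_le {f : α → E} {g : α → F}
    (hf : AEStronglyMeasurable f μ) (hg : AEStronglyMeasurable g μ)
    (hfg : ∀ c : ℝ, 0 < c → ∫⁻ x, ENNReal.ofReal (log⁺ (c * ‖f x‖)) ∂μ ≤
      ∫⁻ x, ENNReal.ofReal (log⁺ (c * ‖g x‖)) ∂μ) {p : ℝ} (hp : 0 < p) :
    ∫⁻ x, ‖f x‖ₑ ^ p ∂μ ≤ ∫⁻ x, ‖g x‖ₑ ^ p ∂μ := by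
  have hK : ENNReal.ofReal ((1 / p) ^ 2) ≠ 0 := (ENNReal.ofReal_pos.mpr (by positivity)).ne'
  rw [← ENNReal.mul_le_mul_iff_right hK ENNReal.ofReal_ne_top,
    ← lintegral_lintegral_posLog_exp_mul_norm hf hp,
    ← lintegral_lintegral_posLog_exp_mul_norm hg hp]
  exact lintegral_mono fun t => mul_le_mul_left (hfg _ (exp_pos t)) _

end LayerCake

section CircleBernstein

open Polynomial

/-- The uniform probability measure on the interval `(0, 2π]` of angles. -/
noncomputable def angleMeasure : Measure ℝ :=
  volume[|Set.Ioc 0 (2 * π)]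

instance : IsProbabilityMeasure angleMeasure :=
  cond_isProbabilityMeasure_of_finite (by simp [pi_pos]) measure_Ioc_lt_top.ne

lemma integral_circleMap_angleMeasure (f : ℂ → ℝ) :
    ∫ θ, f (circleMap 0 1 θ) ∂angleMeasure = circleAverage f 0 1 := by
  rw [angleMeasure, ProbabilityTheory.cond, integral_smul_measure, volume_Ioc, sub_zero,
    ENNReal.toReal_inv, ENNReal.toReal_ofReal two_pi_pos.le, circleAverage_def,
    intervalIntegral.integral_of_le two_pi_pos.le]

lemma integrable_angleMeasure_of_continuous {f : ℝ → ℝ} (hf : Continuous f) :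
    Integrable f angleMeasure :=
  hf.integrableOn_Ioc.smul_measure (by simp [pi_pos])

lemma continuous_eval_circleMap (q : ℂ[X]) : Continuous fun θ : ℝ => q.eval (circleMap 0 1 θ) :=
  q.continuous.comp (continuous_circleMap 0 1)

lemma lintegral_posLog_norm_eval_circleMap (q : ℂ[X]) :
    ∫⁻ θ, ENNReal.ofReal (log⁺ ‖q.eval (circleMap 0 1 θ)‖) ∂angleMeasure =
      ENNReal.ofReal (circleAverage (fun z => log⁺ ‖q.eval z‖) 0 1) := by
  have hint : Integrable (fun θ => log⁺ ‖q.eval (circleMap 0 1 θ)‖) angleMeasure :=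
    integrable_angleMeasure_of_continuous
      (continuous_posLog.comp (continuous_eval_circleMap q).norm)
  rw [← integral_circleMap_angleMeasure, ofReal_integral_eq_lintegral_ofReal hint
    (Filter.Eventually.of_forall fun _ => posLog_nonneg)]

lemma lintegral_angularDeriv_rpow_le {α : ℝ} {N : ℕ} (hα : 2 * α ≤ N) {q : ℂ[X]}
    (hq : q.natDegree ≤ N) {p : ℝ} (hp : 0 < p) :
    ∫⁻ θ, ‖(angularDeriv α q).eval (circleMap 0 1 θ)‖ₑ ^ p ∂angleMeasure ≤
      ENNReal.ofReal (N - α) ^ p * ∫⁻ θ, ‖q.eval (circleMap 0 1 θ)‖ₑ ^ p ∂angleMeasure := by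
  have hN : (0 : ℝ) ≤ N := N.cast_nonneg
  rcases eq_or_lt_of_le (show α ≤ N by linarith) with hαN | hαN
  · obtain rfl : N = 0 := Nat.cast_eq_zero (R := ℝ).mp (by linarith)
    obtain ⟨c, rfl⟩ := natDegree_eq_zero.mp (Nat.le_zero.mp hq)
    simp [angularDeriv, hαN, hp]
  have hpos : 0 < (N - α : ℝ) := sub_pos.mpr hαN
  have hscaled : ∫⁻ θ, ‖(C ((N - α : ℝ) : ℂ)⁻¹ * angularDeriv α q).eval (circleMap 0 1 θ)‖ₑ ^ p
      ∂angleMeasure ≤ ∫⁻ θ, ‖q.eval (circleMap 0 1 θ)‖ₑ ^ p ∂angleMeasure := by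
    refine lintegral_enorm_rpow_le_of_lintegral_posLog_le
      (continuous_eval_circleMap _).aestronglyMeasurable
      (continuous_eval_circleMap q).aestronglyMeasurable (fun c hc => ?_) hp
    have hnorm : ∀ (r : ℂ[X]) (z : ℂ), c * ‖r.eval z‖ = ‖(C (c : ℂ) * r).eval z‖ := fun r z => by
      rw [eval_mul, eval_C, norm_mul, Complex.norm_of_nonneg hc.le]
    simp_rw [hnorm, lintegral_posLog_norm_eval_circleMap]
    rw [mul_left_comm, ← angularDeriv_C_mul]
    exact ENNReal.ofReal_le_ofReal
      (circleAverage_posLog_angularDeriv_le hα hαN ((natDegree_C_mul_le _ _).trans hq))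
  have hscale : ENNReal.ofReal (N - α) = ‖((N - α : ℝ) : ℂ)‖ₑ := by
    rw [← ofReal_norm, Complex.norm_of_nonneg hpos.le]
  calc ∫⁻ θ, ‖(angularDeriv α q).eval (circleMap 0 1 θ)‖ₑ ^ p ∂angleMeasure
      = ∫⁻ θ, ENNReal.ofReal (N - α) ^ p *
          ‖(C ((N - α : ℝ) : ℂ)⁻¹ * angularDeriv α q).eval (circleMap 0 1 θ)‖ₑ ^ p
            ∂angleMeasure := by
        congr 1 with θ
        rw [← ENNReal.mul_rpow_of_nonneg _ _ hp.le, hscale, ← enorm_mul, eval_mul, eval_C,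
          mul_inv_cancel_left₀ (Complex.ofReal_ne_zero.mpr hpos.ne')]
    _ ≤ ENNReal.ofReal (N - α) ^ p * ∫⁻ θ, ‖q.eval (circleMap 0 1 θ)‖ₑ ^ p ∂angleMeasure := by
        rw [lintegral_const_mul' _ _ (by finiteness)]
        gcongr

end CircleBernstein

section Ellipse

open Polynomial

/-- The gradient at `x` of the function `MvPolynomial.eval · P`. -/
noncomputable def evalGradient {σ R : Type*} [CommSemiring R] (P : MvPolynomial σ R) (x : σ → R) :
    σ → R :=
  fun j => MvPolynomial.eval x (MvPolynomial.pderiv j P)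

lemma hasDerivAt_eval_comp {σ 𝕜 : Type*} [Fintype σ] [NontriviallyNormedField 𝕜]
    (P : MvPolynomial σ 𝕜) {c : 𝕜 → σ → 𝕜} {c' : σ → 𝕜} {t : 𝕜} (hc : HasDerivAt c c' t) :
    HasDerivAt (fun s => MvPolynomial.eval (c s) P) (evalGradient P (c t) ⬝ᵥ c') t := by
  simp only [evalGradient, dotProduct]
  induction P using MvPolynomial.induction_on with
  | C a => simpa using hasDerivAt_const t a
  | add P Q hP hQ =>
    simp only [map_add, add_mul, Finset.sum_add_distrib]
    exact hP.add hQ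
  | mul_X P i hP =>
    classical
    have hprod := hP.mul (hasDerivAt_pi.mp hc i)
    simp only [map_mul, MvPolynomial.eval_X]
    refine hprod.congr_deriv ?_
    simp only [Derivation.leibniz, MvPolynomial.pderiv_X, smul_eq_mul, map_add, map_mul,
      MvPolynomial.eval_X, add_mul, Finset.sum_add_distrib, Finset.sum_mul]
    rw [add_comm]
    congr 1
    · rw [Finset.sum_eq_single i] <;> simp +contextual [eq_comm]
    · exact Finset.sum_congr rfl fun j _ => by ring

lemma exists_eval_eq_pow_mul_aeval_div {σ R K : Type*} [Finite σ] [CommSemiring R] [Field K]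
    [Algebra R K] {P : MvPolynomial σ R} {n m : ℕ} (hP : P.totalDegree ≤ n) (hm : 1 ≤ m)
    {L : σ → K[X]} (hL : ∀ j, (L j).natDegree ≤ m) :
    ∃ q : K[X], q.natDegree ≤ n * m ∧ ∀ z : K, z ≠ 0 →
      q.eval z = z ^ n * MvPolynomial.aeval (fun j => (L j).eval z / z) P := by
  have := Fintype.ofFinite σ
  have hsum : ∀ d ∈ P.support, ∑ i, d i ≤ n := fun d hd => by
    have hd := MvPolynomial.le_totalDegree hd
    rw [Finsupp.sum_fintype _ _ fun _ => rfl] at hd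
    exact hd.trans hP
  refine ⟨∑ d ∈ P.support, C (algebraMap R K (P.coeff d)) * (X ^ (n - ∑ i, d i) * ∏ i, L i ^ d i),
    natDegree_sum_le_of_forall_le _ _ fun d hd => ?_, fun z hz => ?_⟩
  · have hprod : (∏ i, L i ^ d i).natDegree ≤ (∑ i, d i) * m := by
      rw [Finset.sum_mul]
      exact (natDegree_prod_le _ _).trans (Finset.sum_le_sum fun i _ =>
        natDegree_pow_le.trans (Nat.mul_le_mul_left _ (hL i)))
    calc _ ≤ (n - ∑ i, d i) + (∏ i, L i ^ d i).natDegree := by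
          refine (natDegree_C_mul_le _ _).trans (natDegree_mul_le.trans ?_)
          rw [natDegree_X_pow]
      _ ≤ (n - ∑ i, d i) * m + (∑ i, d i) * m := add_le_add (Nat.le_mul_of_pos_right _ hm) hprod
      _ = n * m := by rw [← add_mul, Nat.sub_add_cancel (hsum d hd)]
  · rw [MvPolynomial.aeval_def, MvPolynomial.eval₂_eq', eval_finsetSum, Finset.mul_sum]
    refine Finset.sum_congr rfl fun d hd => ?_
    have hpow : z ^ n = z ^ (n - ∑ i, d i) * z ^ ∑ i, d i := by
      rw [← pow_add, Nat.sub_add_cancel (hsum d hd)]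
    simp only [eval_mul, eval_C, eval_pow, eval_X, eval_prod, div_pow, Finset.prod_div_distrib,
      Finset.prod_pow_eq_pow_sum, hpow]
    field_simp

lemma exists_eval_circleMap_eq_eval_ellipse {σ : Type*} [Finite σ] {n : ℕ}
    {P : MvPolynomial σ ℝ} (hP : P.totalDegree ≤ n) (x y : σ → ℝ) :
    ∃ q : ℂ[X], q.natDegree ≤ n * 2 ∧ ∀ θ : ℝ, q.eval (circleMap 0 1 θ) =
      circleMap 0 1 θ ^ n * (MvPolynomial.eval (cos θ • x + sin θ • y) P : ℝ) := by
  set L : σ → ℂ[X] := fun j => C ((x j - Complex.I * y j) / 2) * X ^ 2 +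
    C ((x j + Complex.I * y j) / 2) with hL
  have hLdeg : ∀ j, (L j).natDegree ≤ 2 := fun j =>
    (natDegree_add_le _ _).trans (max_le (natDegree_C_mul_X_pow_le _ _) (by simp))
  have hLeval : ∀ j (θ : ℝ), (L j).eval (circleMap 0 1 θ) =
      ((cos θ • x + sin θ • y) j : ℝ) * circleMap 0 1 θ := fun j θ => by
    simp only [hL, eval_add, eval_mul, eval_C, eval_pow, eval_X, circleMap, zero_add,
      Complex.ofReal_one, one_mul, Complex.exp_mul_I, Pi.add_apply, Pi.smul_apply, smul_eq_mul]
    push_cast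
    linear_combination (-(x j + Complex.I * y j) / 2) * Complex.cos_sq_add_sin_sq θ +
      (Complex.sin θ ^ 2 * (x j - Complex.I * y j) / 2 - y j * Complex.cos θ * Complex.sin θ)
        * Complex.I_sq
  obtain ⟨q, hqdeg, hq⟩ := exists_eval_eq_pow_mul_aeval_div hP one_le_two hLdeg
  refine ⟨q, hqdeg, fun θ => ?_⟩
  have hz : circleMap 0 1 θ ≠ 0 := circleMap_ne_center one_ne_zero
  simp_rw [hq _ hz, hLeval, mul_div_cancel_right₀ _ hz]
  rw [MvPolynomial.aeval_def]
  exact congrArg _ (MvPolynomial.eval₂_comp Complex.ofRealHom _ P).symm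

lemma eval_angularDeriv_circleMap {q : ℂ[X]} {n : ℕ} {f : ℝ → ℂ}
    (hq : ∀ θ : ℝ, q.eval (circleMap 0 1 θ) = circleMap 0 1 θ ^ n * f θ) {f' : ℂ} {θ : ℝ}
    (hf : HasDerivAt f f' θ) :
    (angularDeriv n q).eval (circleMap 0 1 θ) = -Complex.I * circleMap 0 1 θ ^ n * f' := by
  have hz : HasDerivAt (circleMap 0 1) (circleMap 0 1 θ * Complex.I) θ := by
    simpa using hasDerivAt_circleMap 0 1 θ
  have hqz := (q.hasDerivAt (circleMap 0 1 θ)).comp_of_eq θ hz rfl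
  have hfz := (hz.pow n).mul hf
  have hfun : (Polynomial.eval · q) ∘ circleMap 0 1 = circleMap 0 1 ^ n * f := funext hq
  have hderiv := hqz.unique (hfun ▸ hfz)
  have hpow : (n : ℂ) * circleMap 0 1 θ ^ (n - 1) * circleMap 0 1 θ = n * circleMap 0 1 θ ^ n := by
    cases n <;> simp [pow_succ, mul_assoc]
  rw [Pi.pow_apply] at hderiv
  simp only [angularDeriv, eval_sub, eval_mul, eval_X, eval_C, hq]
  push_cast
  linear_combination (-Complex.I) * hderiv + f θ * hpow + ((derivative q).eval (circleMap 0 1 θ) *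
    circleMap 0 1 θ - n * circleMap 0 1 θ ^ (n - 1) * circleMap 0 1 θ * f θ) * Complex.I_sq

/-- Bernstein's inequality: `f` is a trigonometric polynomial of degree at most `n`. -/
lemma lintegral_enorm_deriv_rpow_le_of_eval_circleMap_eq {q : ℂ[X]} {n : ℕ}
    (hqdeg : q.natDegree ≤ n * 2) {f f' : ℝ → ℂ}
    (hq : ∀ θ : ℝ, q.eval (circleMap 0 1 θ) = circleMap 0 1 θ ^ n * f θ)
    (hf : ∀ θ, HasDerivAt f (f' θ) θ) {p : ℝ} (hp : 0 < p) :
    ∫⁻ θ, ‖f' θ‖ₑ ^ p ∂angleMeasure ≤ (n : ENNReal) ^ p * ∫⁻ θ, ‖f θ‖ₑ ^ p ∂angleMeasure := by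
  have hcircle : ∀ θ : ℝ, ‖circleMap 0 1 θ‖ₑ = 1 := fun θ => by simp [← ofReal_norm]
  have hI : ‖Complex.I‖ₑ = 1 := by simp [← ofReal_norm]
  have h := lintegral_angularDeriv_rpow_le (α := n) (N := n * 2) (by push_cast; linarith) hqdeg hp
  have hn : ((n * 2 : ℕ) - n : ℝ) = n := by push_cast; ring
  simpa only [hq, eval_angularDeriv_circleMap hq (hf _), enorm_mul, enorm_pow, hcircle, one_pow,
    one_mul, enorm_neg, hI, hn, ENNReal.ofReal_natCast] using h

lemma lintegral_evalGradient_ellipse_rpow_le {σ : Type*} [Fintype σ] {n : ℕ}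
    {P : MvPolynomial σ ℝ} (hP : P.totalDegree ≤ n) {p : ℝ} (hp : 0 < p) (x y : σ → ℝ) :
    ∫⁻ θ, ‖evalGradient P (cos θ • x + sin θ • y) ⬝ᵥ (-sin θ • x + cos θ • y)‖ₑ ^ p ∂angleMeasure ≤
      (n : ENNReal) ^ p *
        ∫⁻ θ, ‖MvPolynomial.eval (cos θ • x + sin θ • y) P‖ₑ ^ p ∂angleMeasure := by
  obtain ⟨q, hqdeg, hq⟩ := exists_eval_circleMap_eq_eval_ellipse hP x y
  have hderiv : ∀ θ : ℝ, HasDerivAt (fun s => MvPolynomial.eval (cos s • x + sin s • y) P)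
      (evalGradient P (cos θ • x + sin θ • y) ⬝ᵥ (-sin θ • x + cos θ • y)) θ := fun θ =>
    hasDerivAt_eval_comp P
      (((hasDerivAt_cos θ).smul_const x).add ((hasDerivAt_sin θ).smul_const y))
  have h := lintegral_enorm_deriv_rpow_le_of_eval_circleMap_eq hqdeg hq
    (fun θ => (hderiv θ).ofReal_comp) hp
  have hreal : ∀ a : ℝ, ‖(a : ℂ)‖ₑ = ‖a‖ₑ := fun a => by simp [← ofReal_norm]
  simpa only [hreal] using h

end Ellipse

section GaussianMeasure

lemma lintegral_lintegral_rotation {E : Type*} [NormedAddCommGroup E] [NormedSpace ℝ E]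
    [CompleteSpace E] [SecondCountableTopology E] [MeasurableSpace E] [BorelSpace E] {μ : Measure E}
    [IsGaussian μ] (hμ : μ[id] = 0) (ρ : Measure ℝ) [IsProbabilityMeasure ρ] {F : E × E → ENNReal}
    (hF : Measurable F) :
    ∫⁻ z, ∫⁻ θ, F (cos θ • z.1 + sin θ • z.2, -sin θ • z.1 + cos θ • z.2) ∂ρ ∂(μ.prod μ) =
      ∫⁻ z, F z ∂(μ.prod μ) := by
  have hrotation : ∀ θ, ∫⁻ z, F (cos θ • z.1 + sin θ • z.2, -sin θ • z.1 + cos θ • z.2)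
      ∂(μ.prod μ) = ∫⁻ z, F z ∂(μ.prod μ) := fun θ => by
    conv_rhs => rw [← IsGaussian.map_rotation_eq_self hμ θ]
    rw [lintegral_map hF (by fun_prop)]
    simp_rw [ContinuousLinearMap.rotation_apply]
  rw [lintegral_lintegral_swap]
  · simp_rw [hrotation, lintegral_const, measure_univ, mul_one]
  · exact (hF.comp (by fun_prop)).aemeasurable

lemma gaussMeasure_eq_map_stdGaussian (k : ℕ) :
    gaussMeasure k = (stdGaussian (EuclideanSpace ℝ (Fin k))).map
      ((EuclideanSpace.equiv (Fin k) ℝ : EuclideanSpace ℝ (Fin k) ≃L[ℝ] (Fin k → ℝ)) :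
        EuclideanSpace ℝ (Fin k) →L[ℝ] (Fin k → ℝ)) := by
  rw [← map_pi_eq_stdGaussian, Measure.map_map (by fun_prop) (by fun_prop)]
  exact Measure.map_id.symm

instance (k : ℕ) : IsGaussian (gaussMeasure k) := by
  rw [gaussMeasure_eq_map_stdGaussian]
  infer_instance

lemma integral_id_gaussMeasure (k : ℕ) : (gaussMeasure k)[id] = 0 := by
  rw [gaussMeasure_eq_map_stdGaussian, integral_map (by fun_prop) (by fun_prop)]
  simp only [id]
  rw [ContinuousLinearMap.integral_comp_comm _ IsGaussian.integrable_fun_id,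
    integral_id_stdGaussian, map_zero]

lemma map_dotProduct_gaussMeasure {k : ℕ} (v : Fin k → ℝ) :
    (gaussMeasure k).map (v ⬝ᵥ ·) = gaussianReal 0 (∑ j, v j ^ 2).toNNReal := by
  have h := IsGaussian.map_eq_gaussianReal (μ := stdGaussian (EuclideanSpace ℝ (Fin k)))
    (innerSL ℝ (WithLp.toLp 2 v))
  rw [integral_strongDual_stdGaussian, variance_dual_stdGaussian, innerSL_apply_norm,
    EuclideanSpace.real_norm_sq_eq] at h
  rw [← h, gaussMeasure_eq_map_stdGaussian, Measure.map_map (by fun_prop) (by fun_prop)]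
  congr 1 with y
  simp [PiLp.inner_apply, dotProduct, mul_comm]

lemma eLpNorm_id_gaussianReal_zero (v : NNReal) (p : ENNReal) :
    eLpNorm id p (gaussianReal 0 v) = ENNReal.ofReal √v * eLpNorm id p (gaussianReal 0 1) := by
  have hmap : gaussianReal 0 v = (gaussianReal 0 1).map (√v * ·) := by
    rw [gaussianReal_map_const_mul, mul_zero, mul_one]
    congr 1
    exact NNReal.eq (sq_sqrt v.coe_nonneg).symm
  rw [hmap, eLpNorm_map_measure (by fun_prop) (by fun_prop), ← enorm_of_nonneg (sqrt_nonneg _),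
    ← eLpNorm_const_smul]
  rfl

lemma eLpNorm_dotProduct_gaussMeasure {k : ℕ} (v : Fin k → ℝ) (p : ENNReal) :
    eLpNorm (v ⬝ᵥ ·) p (gaussMeasure k) =
      ENNReal.ofReal √(∑ j, v j ^ 2) * eLpNorm id p (gaussianReal 0 1) := by
  have hsum : 0 ≤ ∑ j, v j ^ 2 := Finset.sum_nonneg fun j _ => sq_nonneg (v j)
  have hmeas : Measurable (v ⬝ᵥ ·) := by unfold dotProduct; fun_prop
  rw [← coe_toNNReal _ hsum, ← eLpNorm_id_gaussianReal_zero, ← map_dotProduct_gaussMeasure,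
    eLpNorm_map_measure (by fun_prop) hmeas.aemeasurable]
  rfl

lemma memLp_eval_of_isGaussian {σ : Type*} [Finite σ] {μ : Measure (σ → ℝ)} [IsGaussian μ]
    (P : MvPolynomial σ ℝ) {q : ENNReal} (hq : q ≠ ⊤) :
    MemLp (fun x => MvPolynomial.eval x P) q μ := by
  have := Fintype.ofFinite σ
  induction P using MvPolynomial.induction_on generalizing q with
  | C a => simpa using memLp_const a
  | add P Q hP hQ =>
    simp only [map_add]
    exact (hP hq).add (hQ hq)
  | mul_X P i hP =>
    simp only [map_mul, MvPolynomial.eval_X]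
    have h2q : 2 * q ≠ ⊤ := ENNReal.mul_ne_top ENNReal.ofNat_ne_top hq
    have hX : MemLp (fun x : σ → ℝ => x i) (2 * q) μ :=
      IsGaussian.memLp_dual μ (ContinuousLinearMap.proj i) (2 * q) h2q
    have : ENNReal.HolderTriple (2 * q) (2 * q) q := ⟨by
      rw [ENNReal.mul_inv (by simp) (by simp), ← add_mul, ENNReal.inv_two_add_inv_two, one_mul]⟩
    exact hX.mul (hP h2q)

lemma lintegral_prod_evalGradient_rpow_le {k : ℕ} (P : MvPolynomial (Fin k) ℝ) {p : ℝ}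
    (hp : 0 < p) :
    ∫⁻ x, ∫⁻ y, ‖evalGradient P x ⬝ᵥ y‖ₑ ^ p ∂gaussMeasure k ∂gaussMeasure k ≤
      (P.totalDegree : ENNReal) ^ p * ∫⁻ x, ‖MvPolynomial.eval x P‖ₑ ^ p ∂gaussMeasure k := by
  have hgrad : Measurable fun z : (Fin k → ℝ) × (Fin k → ℝ) =>
      ‖evalGradient P z.1 ⬝ᵥ z.2‖ₑ ^ p := by
    have : ∀ j, Measurable fun z : (Fin k → ℝ) × (Fin k → ℝ) => evalGradient P z.1 j := fun j =>
      (MvPolynomial.continuous_eval _).measurable.comp measurable_fst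
    unfold dotProduct
    fun_prop
  have heval : Measurable fun z : (Fin k → ℝ) × (Fin k → ℝ) => ‖MvPolynomial.eval z.1 P‖ₑ ^ p :=
    (((MvPolynomial.continuous_eval P).measurable.comp measurable_fst).enorm).pow_const p
  calc ∫⁻ x, ∫⁻ y, ‖evalGradient P x ⬝ᵥ y‖ₑ ^ p ∂gaussMeasure k ∂gaussMeasure k
      = ∫⁻ z, ‖evalGradient P z.1 ⬝ᵥ z.2‖ₑ ^ p ∂((gaussMeasure k).prod (gaussMeasure k)) :=
        (lintegral_prod _ hgrad.aemeasurable).symm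
    _ ≤ (P.totalDegree : ENNReal) ^ p *
          ∫⁻ z, ‖MvPolynomial.eval z.1 P‖ₑ ^ p ∂((gaussMeasure k).prod (gaussMeasure k)) := by
        rw [← lintegral_lintegral_rotation (integral_id_gaussMeasure k) angleMeasure hgrad,
          ← lintegral_lintegral_rotation (integral_id_gaussMeasure k) angleMeasure heval,
          ← lintegral_const_mul' _ _ (by finiteness)]
        exact lintegral_mono fun z => lintegral_evalGradient_ellipse_rpow_le le_rfl hp z.1 z.2
    _ = (P.totalDegree : ENNReal) ^ p * ∫⁻ x, ‖MvPolynomial.eval x P‖ₑ ^ p ∂gaussMeasure k := by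
        rw [lintegral_prod _ heval.aemeasurable]
        simp_rw [lintegral_const, measure_univ, mul_one]

lemma eLpNorm_ofReal_rpow {α E : Type*} [MeasurableSpace α] [NormedAddCommGroup E] {p : ℝ}
    (hp : 0 < p) (f : α → E) (μ : Measure α) :
    eLpNorm f (.ofReal p) μ ^ p = ∫⁻ x, ‖f x‖ₑ ^ p ∂μ := by
  have h := eLpNorm_nnreal_pow_eq_lintegral (f := f) (μ := μ) (toNNReal_pos.mpr hp).ne'
  rwa [coe_toNNReal _ hp.le] at h

lemma measurable_gradNorm {k : ℕ} (P : MvPolynomial (Fin k) ℝ) : Measurable (gradNorm P) := by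
  have := fun j => (MvPolynomial.continuous_eval (MvPolynomial.pderiv j P)).measurable
  unfold gradNorm
  fun_prop

lemma eLpNorm_gradNorm_mul_le {k : ℕ} (P : MvPolynomial (Fin k) ℝ) {p : ℝ} (hp : 0 < p) :
    eLpNorm (gradNorm P) (.ofReal p) (gaussMeasure k) *
        eLpNorm id (.ofReal p) (gaussianReal 0 1) ≤
      P.totalDegree * eLpNorm (fun x => MvPolynomial.eval x P) (.ofReal p) (gaussMeasure k) := by
  have hslice : ∀ x, ∫⁻ y, ‖evalGradient P x ⬝ᵥ y‖ₑ ^ p ∂gaussMeasure k =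
      ‖gradNorm P x‖ₑ ^ p * eLpNorm id (.ofReal p) (gaussianReal 0 1) ^ p := fun x => by
    rw [← eLpNorm_ofReal_rpow hp (evalGradient P x ⬝ᵥ ·), eLpNorm_dotProduct_gaussMeasure,
      ENNReal.mul_rpow_of_nonneg _ _ hp.le, gradNorm, enorm_of_nonneg (sqrt_nonneg _)]
    rfl
  have h := lintegral_prod_evalGradient_rpow_le P hp
  simp_rw [hslice] at h
  rw [lintegral_mul_const _ ((measurable_gradNorm P).enorm.pow_const p), ← eLpNorm_ofReal_rpow hp,
    ← eLpNorm_ofReal_rpow hp, ← ENNReal.mul_rpow_of_nonneg _ _ hp.le,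
    ← ENNReal.mul_rpow_of_nonneg _ _ hp.le] at h
  exact (ENNReal.rpow_le_rpow_iff hp).mp h

end GaussianMeasure

section GaussianMoment

lemma ofReal_exp_integral_log_norm_le_eLpNorm {α E : Type*} [MeasurableSpace α] {μ : Measure α}
    [IsProbabilityMeasure μ] [NormedAddCommGroup E] {f : α → E} (hf : ∀ᵐ x ∂μ, f x ≠ 0)
    (hlog : Integrable (fun x => log ‖f x‖) μ) {p : ℝ} (hp : 0 < p) :
    ENNReal.ofReal (exp (∫ x, log ‖f x‖ ∂μ)) ≤ eLpNorm f (.ofReal p) μ := by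
  have hexp : ∀ᵐ x ∂μ, ‖exp (p * log ‖f x‖)‖ₑ = ‖f x‖ₑ ^ p := by
    filter_upwards [hf] with x hx
    rw [enorm_of_nonneg (exp_pos _).le, mul_comm, exp_mul, exp_log (norm_pos_iff.mpr hx),
      ← ENNReal.ofReal_rpow_of_nonneg (norm_nonneg _) hp.le, ofReal_norm]
  rw [← ENNReal.rpow_le_rpow_iff hp, eLpNorm_ofReal_rpow hp, ← lintegral_congr_ae hexp]
  by_cases hint : Integrable (fun x => exp (p * log ‖f x‖)) μ
  · have hjensen := convexOn_exp.map_integral_le continuous_exp.continuousOn isClosed_univ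
      (Filter.Eventually.of_forall fun _ => Set.mem_univ _) (hlog.const_mul p) hint
    rw [integral_const_mul, mul_comm, exp_mul] at hjensen
    rw [ENNReal.ofReal_rpow_of_pos (exp_pos _)]
    refine (ENNReal.ofReal_le_ofReal hjensen).trans ?_
    rw [ofReal_integral_eq_lintegral_ofReal hint
      (Filter.Eventually.of_forall fun _ => exp_nonneg _)]
    simp_rw [enorm_of_nonneg (exp_nonneg _), le_refl]
  · have hmeas : AEStronglyMeasurable (fun x => exp (p * log ‖f x‖)) μ :=
      continuous_exp.comp_aestronglyMeasurable (hlog.aestronglyMeasurable.const_mul p)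
    rw [not_lt_top_iff.mp fun h => hint ⟨hmeas, h⟩]
    exact le_top

lemma gaussianReal_le_volume {m : ℝ} {v : NNReal} (hv : 1 ≤ 2 * π * v) :
    gaussianReal m v ≤ volume := by
  have hv₀ : v ≠ 0 := by
    rintro rfl
    simp only [NNReal.coe_zero, mul_zero] at hv
    exact one_pos.not_ge hv
  rw [gaussianReal_of_var_ne_zero m hv₀]
  conv_rhs => rw [← withDensity_one (μ := volume)]
  refine withDensity_mono (Filter.Eventually.of_forall fun t => ?_)
  rw [Pi.one_apply, gaussianPDF, gaussianPDFReal, ENNReal.ofReal_le_one]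
  refine mul_le_one₀ (inv_le_one_of_one_le₀ (one_le_sqrt.mpr hv)) (exp_nonneg _)
    (exp_le_one_iff.mpr ?_)
  rw [neg_div, neg_nonpos]
  positivity

lemma integrable_log_of_le_volume {μ : Measure ℝ} (hμ : μ ≤ volume) (hid : Integrable id μ) :
    Integrable log μ := by
  have hnear : IntegrableOn log (Set.Ioc (-1) 1) μ :=
    (intervalIntegral.intervalIntegrable_log' (a := -1) (b := 1)).1.mono_measure hμ
  have hfar : IntegrableOn log (Set.Ioc (-1) 1)ᶜ μ := by
    refine Integrable.mono hid.integrableOn measurable_log.aestronglyMeasurable ?_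
    rw [ae_restrict_iff' measurableSet_Ioc.compl]
    refine Filter.Eventually.of_forall fun t ht => ?_
    have ht₁ : 1 ≤ |t| := by
      by_contra! h
      exact ht ⟨(abs_lt.mp h).1, (abs_lt.mp h).2.le⟩
    rw [← log_abs, norm_of_nonneg (log_nonneg ht₁), id, norm_eq_abs]
    linarith [log_le_sub_one_of_pos (one_pos.trans_le ht₁)]
  simpa using hnear.union hfar

lemma lintegral_exp_mul_gaussianReal_le {v : NNReal} (hv₀ : v ≠ 0) (hv₁ : v ≤ 1) {g : ℝ → ENNReal}
    (hg : Measurable g) :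
    ∫⁻ t, ENNReal.ofReal (exp (-((v : ℝ)⁻¹ - 1) * (t ^ 2 / 2))) * g t ∂gaussianReal 0 1 ≤
      ∫⁻ t, g t ∂gaussianReal 0 v := by
  have : 0 < (v : ℝ) := NNReal.coe_pos.mpr (pos_iff_ne_zero.mpr hv₀)
  have hpdf : ∀ t : ℝ, gaussianPDFReal 0 1 t * exp (-((v : ℝ)⁻¹ - 1) * (t ^ 2 / 2)) ≤
      gaussianPDFReal 0 v t := fun t => by
    have hexp : -(t - 0) ^ 2 / (2 * ((1 : NNReal) : ℝ)) + -((v : ℝ)⁻¹ - 1) * (t ^ 2 / 2) =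
        -(t - 0) ^ 2 / (2 * v) := by
      rw [NNReal.coe_one]
      field_simp
      ring
    rw [gaussianPDFReal, gaussianPDFReal, mul_assoc, ← exp_add, hexp]
    gcongr
  rw [gaussianReal_of_var_ne_zero 0 one_ne_zero, gaussianReal_of_var_ne_zero 0 hv₀,
    lintegral_withDensity_eq_lintegral_mul _ (measurable_gaussianPDF _ _) (by fun_prop),
    lintegral_withDensity_eq_lintegral_mul _ (measurable_gaussianPDF _ _) hg]
  refine lintegral_mono fun t => ?_
  rw [Pi.mul_apply, Pi.mul_apply, ← mul_assoc, gaussianPDF, gaussianPDF,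
    ← ENNReal.ofReal_mul (gaussianPDFReal_nonneg _ _ _)]
  gcongr
  exact hpdf t

lemma ofReal_sqrt_mul_eLpNorm_mul_exp_le {p : ℝ} (hp : 0 < p) :
    ENNReal.ofReal √(p + 1) *
        eLpNorm (fun t => t * exp (-(t ^ 2 / 2))) (.ofReal p) (gaussianReal 0 1) ≤
      eLpNorm id (.ofReal p) (gaussianReal 0 1) := by
  have hp₁ : 0 < p + 1 := by linarith
  set v : NNReal := (p + 1).toNNReal⁻¹ with hv
  have hvr : (v : ℝ) = (p + 1)⁻¹ := by rw [hv, NNReal.coe_inv, coe_toNNReal _ hp₁.le]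
  have hv₀ : v ≠ 0 := inv_ne_zero (toNNReal_pos.mpr hp₁).ne'
  have hv₁ : v ≤ 1 := inv_le_one_of_one_le₀ (one_le_toNNReal.mpr (by linarith))
  have hle : eLpNorm (fun t => t * exp (-(t ^ 2 / 2))) (.ofReal p) (gaussianReal 0 1) ≤
      eLpNorm id (.ofReal p) (gaussianReal 0 v) := by
    rw [← ENNReal.rpow_le_rpow_iff hp, eLpNorm_ofReal_rpow hp, eLpNorm_ofReal_rpow hp]
    refine le_of_eq_of_le (lintegral_congr fun t => ?_)
      (lintegral_exp_mul_gaussianReal_le hv₀ hv₁ (by fun_prop))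
    rw [hvr, inv_inv, add_sub_cancel_right, enorm_mul, ENNReal.mul_rpow_of_nonneg _ _ hp.le,
      mul_comm, enorm_of_nonneg (exp_pos _).le, ENNReal.ofReal_rpow_of_pos (exp_pos _), ← exp_mul,
      neg_mul_comm, mul_comm _ (-p), id]
  calc _ ≤ ENNReal.ofReal √(p + 1) * eLpNorm id (.ofReal p) (gaussianReal 0 v) := by gcongr
    _ = eLpNorm id (.ofReal p) (gaussianReal 0 1) := by
      rw [eLpNorm_id_gaussianReal_zero, ← mul_assoc, ← ENNReal.ofReal_mul (sqrt_nonneg _),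
        ← sqrt_mul hp₁.le, hvr, mul_inv_cancel₀ hp₁.ne', sqrt_one, ENNReal.ofReal_one, one_mul]

lemma exists_ofReal_mul_sqrt_le_eLpNorm_id_gaussianReal :
    ∃ c : ℝ, 0 < c ∧ ∀ p : ℝ, 0 < p →
      ENNReal.ofReal (c * √(p + 1)) ≤ eLpNorm id (.ofReal p) (gaussianReal 0 1) := by
  set f : ℝ → ℝ := fun t => t * exp (-(t ^ 2 / 2)) with hf
  have hne : ∀ᵐ t ∂gaussianReal 0 1, t ≠ 0 := by
    have := nullSingletonClass_gaussianReal (μ := 0) (v := 1) one_ne_zero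
    exact Measure.ae_ne _ 0
  have hlogint : Integrable log (gaussianReal 0 1) :=
    integrable_log_of_le_volume
      (gaussianReal_le_volume (by rw [NNReal.coe_one]; linarith [pi_gt_three]))
      IsGaussian.integrable_id
  have hsqint : Integrable (fun t : ℝ => t ^ 2 / 2) (gaussianReal 0 1) :=
    (memLp_id_gaussianReal (μ := 0) (v := 1) 2).integrable_sq.div_const 2
  have hlog : Integrable (fun t => log ‖f t‖) (gaussianReal 0 1) := by
    refine (hlogint.sub hsqint).congr ?_
    filter_upwards [hne] with t ht
    rw [Pi.sub_apply, hf, norm_eq_abs, log_abs, log_mul ht (exp_pos _).ne', log_exp, sub_eq_add_neg]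
  have hfne : ∀ᵐ t ∂gaussianReal 0 1, f t ≠ 0 :=
    hne.mono fun t ht => mul_ne_zero ht (exp_pos _).ne'
  refine ⟨exp (∫ t, log ‖f t‖ ∂gaussianReal 0 1), exp_pos _, fun p hp => ?_⟩
  rw [mul_comm, ENNReal.ofReal_mul (sqrt_nonneg _)]
  exact (mul_le_mul_right (ofReal_exp_integral_log_norm_le_eLpNorm hfne hlog hp) _).trans
    (ofReal_sqrt_mul_eLpNorm_mul_exp_le hp)

end GaussianMoment

lemma lpNormGauss_eq_toReal_eLpNorm {k : ℕ} {p : ℝ} (hp : 0 < p) {f : (Fin k → ℝ) → ℝ}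
    (hf : AEStronglyMeasurable f (gaussMeasure k)) :
    lpNormGauss p f = (eLpNorm f (.ofReal p) (gaussMeasure k)).toReal := by
  rw [toReal_eLpNorm hf, lpNorm_eq_integral_norm_rpow_toReal (ENNReal.ofReal_pos.mpr hp).ne'
    ENNReal.ofReal_ne_top hf, ENNReal.toReal_ofReal hp.le, lpNormGauss, one_div]
  rfl

/-- Dimension independent Bernstein–Markov inequality with linear dependence on the degree. -/
theorem bernstein_markov_linear :
    ∃ C : ℝ, 0 < C ∧ ∀ k : ℕ, 1 ≤ k → ∀ p : ℝ, 0 < p → ∀ P : MvPolynomial (Fin k) ℝ,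
      lpNormGauss p (gradNorm P) ≤
        C * ((P.totalDegree : ℝ) / Real.sqrt (p + 1)) *
          lpNormGauss p (fun x => MvPolynomial.eval x P) := by
  obtain ⟨c, hc, hmoment⟩ := exists_ofReal_mul_sqrt_le_eLpNorm_id_gaussianReal
  refine ⟨c⁻¹, inv_pos.mpr hc, fun k _ p hp P => ?_⟩
  have hP := memLp_eval_of_isGaussian (μ := gaussMeasure k) P (ENNReal.ofReal_ne_top (r := p))
  have hle := (mul_le_mul_right (hmoment p hp) _).trans (eLpNorm_gradNorm_mul_le P hp)
  have hreal : lpNormGauss p (gradNorm P) * (c * √(p + 1)) ≤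
      P.totalDegree * lpNormGauss p fun x => MvPolynomial.eval x P := by
    rw [lpNormGauss_eq_toReal_eLpNorm hp (measurable_gradNorm P).aestronglyMeasurable,
      lpNormGauss_eq_toReal_eLpNorm hp hP.1]
    have h := ENNReal.toReal_mono (ENNReal.mul_ne_top (ENNReal.natCast_ne_top _) hP.2.ne) hle
    rwa [ENNReal.toReal_mul, ENNReal.toReal_mul, ENNReal.toReal_ofReal (by positivity),
      ENNReal.toReal_natCast] at h
  calc lpNormGauss p (gradNorm P)
      ≤ (P.totalDegree * lpNormGauss p fun x => MvPolynomial.eval x P) / (c * √(p + 1)) :=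
        (le_div_iff₀ (by positivity)).mpr hreal
    _ = _ := by field_simp
end

section
/- For every p ≥ 1, every integer k ≥ 1, and every polynomial P on ℝ^k, one has ‖(−L)^{1/2} P‖_{L^p(γ_k)} ≤ 2 · ‖P‖_{L^p(γ_k)}^{1/2} · ‖LP‖_{L^p(γ_k)}^{1/2}. -/
open MeasureTheory ProbabilityTheory Real

/-- The Ornstein–Uhlenbeck operator `L P (x) = Δ P (x) - x · ∇P (x)` applied to a
polynomial on `ℝ^k`. -/
noncomputable def OU {k : ℕ} (P : MvPolynomial (Fin k) ℝ) (x : Fin k → ℝ) : ℝ :=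
  (∑ j, MvPolynomial.eval x (MvPolynomial.pderiv j (MvPolynomial.pderiv j P)))
    - ∑ j, x j * MvPolynomial.eval x (MvPolynomial.pderiv j P)

/-- The multivariate probabilists' Hermite polynomial `H_α = ∏_j H_{α_j}(x_j)` as a
polynomial on `ℝ^k`. -/
noncomputable def hermiteMv {k : ℕ} (α : Fin k →₀ ℕ) : MvPolynomial (Fin k) ℝ :=
  ∏ j, Polynomial.aeval (MvPolynomial.X j) (Polynomial.hermite (α j))

/-- The polynomial `P = ∑_α c_α H_α` with Hermite coefficients `c`. -/
noncomputable def hermExpansion {k : ℕ} (c : (Fin k →₀ ℕ) →₀ ℝ) : MvPolynomial (Fin k) ℝ :=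
  ∑ α ∈ c.support, MvPolynomial.C (c α) * hermiteMv α

/-- `(-L)^{1/2} P`, defined on polynomials by `(-L)^{1/2} H_α = |α|^{1/2} H_α` extended
linearly, evaluated at `x ∈ ℝ^k`. -/
noncomputable def sqrtNegL {k : ℕ} (c : (Fin k →₀ ℕ) →₀ ℝ) (x : Fin k → ℝ) : ℝ :=
  ∑ α ∈ c.support, Real.sqrt (∑ j, (α j : ℝ)) * c α * MvPolynomial.eval x (hermiteMv α)

/-!
For `μ ≥ 0` and `0 < a < 1` one has
`μ ^ a = a / Γ(1 - a) * ∫ s in (0, ∞), (1 - exp (-s μ)) * s ^ (-a - 1)`, which expresses `(-L)^a`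
through the Ornstein–Uhlenbeck semigroup `T_s = exp (sL)`. By Mehler's formula
`T_s f(x) = 𝔼 f(exp (-s) x + √(1 - exp (-2s)) Y)`, Jensen's inequality and the rotation invariance
of the Gaussian measure, `T_s` is a contraction of `L^p(γ_k)` for `p ≥ 1`. Hence
`‖P - T_s P‖ ≤ min (2‖P‖) (s‖LP‖)`, and integrating this bound against `s ^ (-a - 1)` gives
`‖(-L)^a P‖ ≤ 2 ^ (1 - a) / Γ(2 - a) * ‖P‖ ^ (1 - a) * ‖LP‖ ^ a`. At `a = 1 / 2` the constant is
`√(8 / π) < 2`.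
-/

open Set Filter
open scoped NNReal ENNReal Topology

/-! ### Fractional powers of the generator of a contraction semigroup -/

section FractionalPower

variable {a M N : ℝ}

lemma rpow_neg_sub_one_mul_self {s : ℝ} (hs : 0 < s) : s ^ (-a - 1) * s = s ^ (-a) := by
  rw [← rpow_add_one hs.ne', sub_add_cancel]

lemma integrableOn_Ioi_rpow_mul_min (ha₀ : 0 < a) (ha₁ : a < 1) (hM : 0 ≤ M) (hN : 0 ≤ N) :
    IntegrableOn (fun s : ℝ => s ^ (-a - 1) * min (s * M) N) (Ioi 0) := by
  have hmeas : ∀ t : Set ℝ, AEStronglyMeasurable (fun s : ℝ => s ^ (-a - 1) * min (s * M) N)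
      (volume.restrict t) := fun t => by fun_prop
  have hnear : IntegrableOn (fun s : ℝ => s ^ (-a) * M) (Ioc 0 1) :=
    ((intervalIntegral.intervalIntegrable_rpow' (by linarith)).1).mul_const M
  have hfar : IntegrableOn (fun s : ℝ => s ^ (-a - 1) * N) (Ioi 1) :=
    (integrableOn_Ioi_rpow_of_lt (by linarith) one_pos).mul_const N
  rw [← Ioc_union_Ioi_eq_Ioi zero_le_one]
  refine IntegrableOn.union (hnear.mono' (hmeas _) ?_) (hfar.mono' (hmeas _) ?_)
  · filter_upwards [ae_restrict_mem measurableSet_Ioc] with s hs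
    have hs₀ : 0 < s := hs.1
    rw [norm_of_nonneg (by positivity), ← rpow_neg_sub_one_mul_self hs₀, mul_assoc]
    gcongr
    exact min_le_left _ _
  · filter_upwards [ae_restrict_mem measurableSet_Ioi] with s hs
    have hs₀ : 0 < s := one_pos.trans hs
    rw [norm_of_nonneg (by positivity)]
    gcongr
    exact min_le_right _ _

lemma integral_Ioi_rpow_mul_min (ha₀ : 0 < a) (ha₁ : a < 1) (hM : 0 ≤ M) (hN : 0 ≤ N) :
    ∫ s in Ioi (0 : ℝ), s ^ (-a - 1) * min (s * M) N = M ^ a * N ^ (1 - a) / (a * (1 - a)) := by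
  have hvanish : ∀ x, 0 ≤ x → ∫ s in Ioi (0 : ℝ), s ^ (-a - 1) * min (s * x) 0 = 0 := fun x hx =>
    setIntegral_eq_zero_of_forall_eq_zero fun s hs => by
      rw [min_eq_right (mul_nonneg (le_of_lt hs) hx), mul_zero]
  rcases hM.eq_or_lt with rfl | hM
  · simp [min_eq_left hN, zero_rpow ha₀.ne']
  rcases hN.eq_or_lt with rfl | hN
  · simp [hvanish M hM.le, zero_rpow (sub_pos.2 ha₁).ne']
  set r := N / M with hr_def
  have hr : 0 < r := div_pos hN hM
  have hnear : ∫ s in Ioc 0 r, s ^ (-a - 1) * min (s * M) N = r ^ (1 - a) / (1 - a) * M := by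
    calc ∫ s in Ioc 0 r, s ^ (-a - 1) * min (s * M) N = ∫ s in Ioc 0 r, s ^ (-a) * M := by
          refine setIntegral_congr_fun measurableSet_Ioc fun s hs => ?_
          simp only [min_eq_left ((le_div_iff₀ hM).1 hs.2), ← mul_assoc,
            rpow_neg_sub_one_mul_self hs.1]
      _ = r ^ (1 - a) / (1 - a) * M := by
          rw [integral_mul_const, ← intervalIntegral.integral_of_le hr.le,
            integral_rpow (Or.inl (by linarith)), neg_add_eq_sub, zero_rpow (by linarith), sub_zero]
  have hfar : ∫ s in Ioi r, s ^ (-a - 1) * min (s * M) N = r ^ (-a) / a * N := by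
    calc ∫ s in Ioi r, s ^ (-a - 1) * min (s * M) N = ∫ s in Ioi r, s ^ (-a - 1) * N := by
          refine setIntegral_congr_fun measurableSet_Ioi fun s hs => ?_
          simp only [min_eq_right ((div_le_iff₀ hM).1 (le_of_lt hs))]
      _ = r ^ (-a) / a * N := by
          rw [integral_mul_const, integral_Ioi_rpow_of_lt (by linarith) hr, sub_add_cancel,
            neg_div_neg_eq]
  have hint := integrableOn_Ioi_rpow_mul_min ha₀ ha₁ hM.le hN.le
  have ha₁' : 1 - a ≠ 0 := by linarith
  rw [← Ioc_union_Ioi_eq_Ioi hr.le] at hint ⊢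
  rw [setIntegral_union (Ioc_disjoint_Ioi le_rfl) measurableSet_Ioi hint.left_of_union
    hint.right_of_union, hnear, hfar, hr_def, div_rpow hN.le hM.le, div_rpow hN.le hM.le,
    rpow_sub hN, rpow_sub hM, rpow_neg hN.le, rpow_neg hM.le, rpow_one, rpow_one]
  field_simp
  ring

lemma one_sub_exp_neg_le_min (x : ℝ) : 1 - exp (-x) ≤ min x 1 :=
  le_min (by linarith [add_one_le_exp (-x)]) (by linarith [exp_pos (-x)])

lemma integrableOn_Ioi_rpow_mul_one_sub_exp (ha₀ : 0 < a) (ha₁ : a < 1) (hM : 0 ≤ M) :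
    IntegrableOn (fun s : ℝ => s ^ (-a - 1) * (1 - exp (-(s * M)))) (Ioi 0) := by
  refine (integrableOn_Ioi_rpow_mul_min ha₀ ha₁ hM zero_le_one).mono' (by fun_prop) ?_
  filter_upwards [ae_restrict_mem measurableSet_Ioi] with s (hs : 0 < s)
  have hexp : exp (-(s * M)) ≤ 1 := exp_le_one_iff.2 (neg_nonpos.2 (by positivity))
  rw [norm_of_nonneg (mul_nonneg (by positivity) (sub_nonneg.2 hexp))]
  gcongr
  exact one_sub_exp_neg_le_min _

lemma tendsto_rpow_neg_mul_one_sub_exp_nhdsGT_zero (ha₁ : a < 1) (hM : 0 ≤ M) :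
    Tendsto (fun s : ℝ => s ^ (-a) * (1 - exp (-(s * M)))) (𝓝[>] 0) (𝓝 0) := by
  have hbound : Tendsto (fun s : ℝ => s ^ (1 - a) * M) (𝓝[>] 0) (𝓝 0) := by
    have := (continuousAt_rpow_const 0 (1 - a) (Or.inr (by linarith))).tendsto.mul_const M
    rw [zero_rpow (by linarith), zero_mul] at this
    exact this.mono_left nhdsWithin_le_nhds
  refine squeeze_zero' ?_ ?_ hbound <;> filter_upwards [self_mem_nhdsWithin] with s (hs : 0 < s)
  · have hexp : exp (-(s * M)) ≤ 1 := exp_le_one_iff.2 (neg_nonpos.2 (by positivity))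
    exact mul_nonneg (by positivity) (sub_nonneg.2 hexp)
  · calc s ^ (-a) * (1 - exp (-(s * M))) ≤ s ^ (-a) * (s * M) := by
          gcongr
          exact (one_sub_exp_neg_le_min _).trans (min_le_left _ _)
      _ = s ^ (1 - a) * M := by rw [← mul_assoc, ← rpow_add_one hs.ne', neg_add_eq_sub]

lemma tendsto_rpow_neg_mul_one_sub_exp_atTop (ha₀ : 0 < a) (hM : 0 ≤ M) :
    Tendsto (fun s : ℝ => s ^ (-a) * (1 - exp (-(s * M)))) atTop (𝓝 0) := by
  refine squeeze_zero' ?_ ?_ (tendsto_rpow_neg_atTop ha₀) <;>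
    filter_upwards [eventually_gt_atTop 0] with s hs
  · have hexp : exp (-(s * M)) ≤ 1 := exp_le_one_iff.2 (neg_nonpos.2 (by positivity))
    exact mul_nonneg (by positivity) (sub_nonneg.2 hexp)
  · exact mul_le_of_le_one_right (by positivity)
      ((one_sub_exp_neg_le_min _).trans (min_le_right _ _))

theorem integral_Ioi_rpow_mul_one_sub_exp (ha₀ : 0 < a) (ha₁ : a < 1) (hM : 0 ≤ M) :
    ∫ s in Ioi (0 : ℝ), s ^ (-a - 1) * (1 - exp (-(s * M))) = Gamma (1 - a) / a * M ^ a := by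
  rcases hM.eq_or_lt with rfl | hM
  · simp [zero_rpow ha₀.ne']
  have hu : ∀ s ∈ Ioi (0 : ℝ), HasDerivAt (fun s : ℝ => s ^ (-a)) (-a * s ^ (-a - 1)) s :=
    fun s hs => hasDerivAt_rpow_const (Or.inl (ne_of_gt hs))
  have hv : ∀ s ∈ Ioi (0 : ℝ),
      HasDerivAt (fun s => 1 - exp (-(s * M))) (M * exp (-(M * s))) s := fun s _ =>
    (((hasDerivAt_id s).mul_const M).neg.exp.const_sub 1).congr_deriv (by simp; ring_nf)
  have hu'v : IntegrableOn ((fun s : ℝ => -a * s ^ (-a - 1)) * fun s => 1 - exp (-(s * M)))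
      (Ioi 0) :=
    ((integrableOn_Ioi_rpow_mul_one_sub_exp ha₀ ha₁ hM.le).const_mul (-a)).congr
      (.of_forall fun s => by simp [mul_assoc])
  have huv' : IntegrableOn ((fun s : ℝ => s ^ (-a)) * fun s => M * exp (-(M * s))) (Ioi 0) := by
    have := integrableOn_rpow_mul_exp_neg_mul_rpow (s := -a) (by linarith) one_pos hM
    refine (this.const_mul M).congr (.of_forall fun s => ?_)
    simp [mul_left_comm]
  have hparts := integral_Ioi_mul_deriv_eq_deriv_mul hu hv huv' hu'v
    (tendsto_rpow_neg_mul_one_sub_exp_nhdsGT_zero ha₁ hM.le)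
    (tendsto_rpow_neg_mul_one_sub_exp_atTop ha₀ hM.le)
  have hGamma : ∫ s in Ioi (0 : ℝ), s ^ (-a) * (M * exp (-(M * s))) = Gamma (1 - a) * M ^ a := by
    have := integral_rpow_mul_exp_neg_mul_Ioi (sub_pos.2 ha₁) hM
    simp only [sub_sub_cancel_left] at this
    simp only [mul_left_comm _ M]
    rw [integral_const_mul, this, one_div, inv_rpow hM.le, ← rpow_neg hM.le, neg_sub,
      rpow_sub_one hM.ne']
    field_simp
  simp only [mul_assoc, integral_const_mul, hGamma] at hparts
  field_simp
  linarith

variable {E ι : Type*} [NormedAddCommGroup E] [NormedSpace ℝ E]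

theorem norm_integral_Ioi_rpow_smul_le (ha₀ : 0 < a) (ha₁ : a < 1) {f : ℝ → E}
    (hM : ∀ s, 0 < s → ‖f s‖ ≤ s * M) (hN : ∀ s, 0 < s → ‖f s‖ ≤ N) :
    ‖∫ s in Ioi (0 : ℝ), s ^ (-a - 1) • f s‖ ≤ M ^ a * N ^ (1 - a) / (a * (1 - a)) := by
  have hM₀ : 0 ≤ M := (norm_nonneg (f 1)).trans (by simpa using hM 1 one_pos)
  have hN₀ : 0 ≤ N := (norm_nonneg (f 1)).trans (hN 1 one_pos)
  rw [← integral_Ioi_rpow_mul_min ha₀ ha₁ hM₀ hN₀]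
  refine norm_integral_le_of_norm_le (integrableOn_Ioi_rpow_mul_min ha₀ ha₁ hM₀ hN₀) ?_
  filter_upwards [ae_restrict_mem measurableSet_Ioi] with s (hs : 0 < s)
  rw [norm_smul, norm_of_nonneg (by positivity)]
  gcongr
  exact le_min (hM s hs) (hN s hs)

variable (S : Finset ι) (x : ι → E) (μ : ι → ℝ)

theorem norm_sum_one_sub_exp_smul_le
    (hgen : ∀ s, 0 ≤ s → ‖∑ i ∈ S, exp (-(s * μ i)) • μ i • x i‖ ≤ ‖∑ i ∈ S, μ i • x i‖)
    {s : ℝ} (hs : 0 ≤ s) :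
    ‖∑ i ∈ S, (1 - exp (-(s * μ i))) • x i‖ ≤ s * ‖∑ i ∈ S, μ i • x i‖ := by
  have hderiv : ∀ t, HasDerivAt (fun t => ∑ i ∈ S, (1 - exp (-(t * μ i))) • x i)
      (∑ i ∈ S, exp (-(t * μ i)) • μ i • x i) t := fun t =>
    HasDerivAt.fun_sum fun i _ =>
      ((((hasDerivAt_id t).mul_const (μ i)).neg.exp.const_sub 1).smul_const (x i)).congr_deriv
        (by simp [smul_smul])
  have := norm_image_sub_le_of_norm_deriv_le_segment' (a := 0) (b := s)
    (fun t _ => (hderiv t).hasDerivWithinAt) (fun t ht => hgen t ht.1) s ⟨hs, le_rfl⟩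
  simpa [mul_comm s] using this

theorem integral_Ioi_rpow_smul_sum_one_sub_exp_smul [CompleteSpace E] (ha₀ : 0 < a) (ha₁ : a < 1)
    (hμ : ∀ i, 0 ≤ μ i) :
    ∫ s in Ioi (0 : ℝ), s ^ (-a - 1) • ∑ i ∈ S, (1 - exp (-(s * μ i))) • x i =
      (Gamma (1 - a) / a) • ∑ i ∈ S, μ i ^ a • x i := by
  simp only [Finset.smul_sum, smul_smul]
  rw [integral_finsetSum _ fun i _ =>
    (integrableOn_Ioi_rpow_mul_one_sub_exp ha₀ ha₁ (hμ i)).smul_const (x i)]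
  simp only [integral_smul_const, integral_Ioi_rpow_mul_one_sub_exp ha₀ ha₁ (hμ _)]

theorem norm_sum_rpow_smul_le [CompleteSpace E] (ha₀ : 0 < a) (ha₁ : a < 1) (hμ : ∀ i, 0 ≤ μ i)
    (hsemi : ∀ s, 0 ≤ s → ‖∑ i ∈ S, exp (-(s * μ i)) • x i‖ ≤ ‖∑ i ∈ S, x i‖)
    (hgen : ∀ s, 0 ≤ s → ‖∑ i ∈ S, exp (-(s * μ i)) • μ i • x i‖ ≤ ‖∑ i ∈ S, μ i • x i‖) :
    ‖∑ i ∈ S, μ i ^ a • x i‖ ≤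
      2 ^ (1 - a) / Gamma (2 - a) * ‖∑ i ∈ S, x i‖ ^ (1 - a) * ‖∑ i ∈ S, μ i • x i‖ ^ a := by
  have ha₁' : 0 < 1 - a := sub_pos.2 ha₁
  have hdiff : ∀ s, 0 < s → ‖∑ i ∈ S, (1 - exp (-(s * μ i))) • x i‖ ≤ 2 * ‖∑ i ∈ S, x i‖ := by
    intro s hs
    simp only [sub_smul, one_smul, Finset.sum_sub_distrib]
    linarith [norm_sub_le (∑ i ∈ S, x i) (∑ i ∈ S, exp (-(s * μ i)) • x i), hsemi s hs.le]
  have hbound := norm_integral_Ioi_rpow_smul_le ha₀ ha₁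
    (fun s hs => norm_sum_one_sub_exp_smul_le S x μ hgen (le_of_lt hs)) hdiff
  have hΓ : 0 < Gamma (1 - a) := Gamma_pos_of_pos ha₁'
  have hΓ' : Gamma (2 - a) = (1 - a) * Gamma (1 - a) := by
    rw [← Gamma_add_one ha₁'.ne']
    ring_nf
  rw [integral_Ioi_rpow_smul_sum_one_sub_exp_smul S x μ ha₀ ha₁ hμ, norm_smul,
    norm_of_nonneg (by positivity), ← le_div_iff₀' (by positivity)] at hbound
  refine hbound.trans_eq ?_
  rw [hΓ', mul_rpow two_pos.le (norm_nonneg _)]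
  field_simp

end FractionalPower

/-! ### Functions with finite moments of all orders -/

section FiniteMoments

variable {Ω : Type*} [MeasurableSpace Ω]

/-- The algebra `L^{∞-}(μ) = ⋂_{q < ∞} L^q(μ)` of functions with finite moments of all orders. It
contains the coordinates of a Gaussian vector, hence all polynomials in them. -/
def finiteMoments (μ : Measure Ω) [IsFiniteMeasure μ] : Subalgebra ℝ (Ω → ℝ) where
  carrier := {f | ∀ q : ℝ≥0, MemLp f q μ}
  add_mem' hf hg q := (hf q).add (hg q)
  algebraMap_mem' r _ := memLp_const r
  mul_mem' hf hg q := by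
    have : ENNReal.HolderTriple (2 * q : ℝ≥0) (2 * q : ℝ≥0) q :=
      ⟨by simp [ENNReal.mul_inv, ← add_mul, ENNReal.inv_two_add_inv_two]⟩
    exact (hg (2 * q)).mul (hf (2 * q))

variable {μ : Measure Ω} [IsFiniteMeasure μ]

lemma integrable_of_mem_finiteMoments {f : Ω → ℝ} (hf : f ∈ finiteMoments μ) : Integrable f μ :=
  memLp_one_iff_integrable.1 (hf 1)

lemma const_mem_finiteMoments (r : ℝ) : (fun _ => r) ∈ finiteMoments μ :=
  (finiteMoments μ).algebraMap_mem r

lemma aeval_mem_finiteMoments {f : Ω → ℝ} (hf : f ∈ finiteMoments μ) (q : Polynomial ℤ) :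
    (fun ω => Polynomial.aeval (f ω) q) ∈ finiteMoments μ := by
  have : (fun ω => Polynomial.aeval (f ω) q) = Polynomial.aeval f q :=
    (Polynomial.aeval_pi_apply f q).symm
  rw [this, Polynomial.aeval_eq_sum_range]
  exact sum_mem fun i _ => zsmul_mem (pow_mem hf i) _

lemma eval_mem_finiteMoments {σ : Type*} {f : σ → Ω → ℝ} (hf : ∀ i, f i ∈ finiteMoments μ)
    (P : MvPolynomial σ ℝ) : (fun ω => MvPolynomial.eval (f · ω) P) ∈ finiteMoments μ := by
  induction P using MvPolynomial.induction_on with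
  | C r => simpa using const_mem_finiteMoments r
  | add P Q hP hQ => simpa using! add_mem hP hQ
  | mul_X P i hP => simpa using! mul_mem hP (hf i)

end FiniteMoments

lemma id_mem_finiteMoments_gaussianReal (m : ℝ) (v : ℝ≥0) :
    (fun x => x) ∈ finiteMoments (gaussianReal m v) :=
  memLp_id_gaussianReal

lemma mul_add_mul_mem_finiteMoments_gaussianReal (m : ℝ) (v : ℝ≥0) (a b x : ℝ) :
    (fun y => a * x + b * y) ∈ finiteMoments (gaussianReal m v) :=
  add_mem (const_mem_finiteMoments (a * x))
    (Subalgebra.smul_mem _ (id_mem_finiteMoments_gaussianReal m v) b)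

/-! ### Hermite polynomials and Mehler's formula in dimension one -/

theorem derivative_hermite_succ (n : ℕ) :
    Polynomial.derivative (Polynomial.hermite (n + 1)) = (n + 1 : ℤ) • Polynomial.hermite n := by
  induction n with
  | zero => simp
  | succ n ih =>
    rw [Polynomial.hermite_succ (n + 1), Polynomial.derivative_sub, Polynomial.derivative_mul, ih,
      Polynomial.derivative_smul, Polynomial.derivative_X, Polynomial.hermite_succ n]
    simp only [zsmul_eq_mul]
    push_cast
    ring

theorem derivative_derivative_hermite (n : ℕ) :
    Polynomial.derivative (Polynomial.derivative (Polynomial.hermite n)) =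
      Polynomial.X * Polynomial.derivative (Polynomial.hermite n) -
        (n : ℤ) • Polynomial.hermite n := by
  cases n with
  | zero => simp
  | succ n =>
    rw [derivative_hermite_succ, Polynomial.derivative_smul, Polynomial.hermite_succ n]
    simp only [zsmul_eq_mul]
    push_cast
    ring

lemma hasDerivAt_gaussianPDFReal (m : ℝ) {v : ℝ≥0} (x : ℝ) :
    HasDerivAt (gaussianPDFReal m v) (-((x - m) / v) * gaussianPDFReal m v x) x := by
  have := ((((hasDerivAt_id x).sub_const m).pow 2).neg.div_const (2 * v : ℝ)).exp.const_mul
    (√(2 * π * v))⁻¹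
  rw [gaussianPDFReal_def]
  refine this.congr_deriv ?_
  simp
  ring

lemma integrable_gaussianReal_iff {m : ℝ} {v : ℝ≥0} (hv : v ≠ 0) {f : ℝ → ℝ} :
    Integrable f (gaussianReal m v) ↔ Integrable fun x => gaussianPDFReal m v x * f x := by
  rw [gaussianReal_of_var_ne_zero m hv, integrable_withDensity_iff_integrable_smul'
    (measurable_gaussianPDF m v) (ae_of_all _ fun _ => gaussianPDF_lt_top)]
  simp

/-- Gaussian integration by parts (Stein's lemma). -/
theorem integral_sub_mul_gaussianReal {m : ℝ} {v : ℝ≥0} {f f' : ℝ → ℝ}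
    (hf : ∀ x, HasDerivAt f (f' x) x) (hint : Integrable f (gaussianReal m v))
    (hint' : Integrable f' (gaussianReal m v))
    (hmul : Integrable (fun x => (x - m) * f x) (gaussianReal m v)) :
    ∫ x, (x - m) * f x ∂gaussianReal m v = v * ∫ x, f' x ∂gaussianReal m v := by
  rcases eq_or_ne v 0 with rfl | hv
  · simp
  have hzero := integral_eq_zero_of_hasDerivAt_of_integrable
    (fun x => (((hasDerivAt_gaussianPDFReal m x).mul (hf x)).congr_deriv (by ring) :
      HasDerivAt _ (gaussianPDFReal m v x * (f' x - (x - m) * f x / v)) x))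
    ((integrable_gaussianReal_iff hv).1 (hint'.sub (hmul.div_const v)))
    ((integrable_gaussianReal_iff hv).1 hint)
  have hsub : ∫ x, (f' x - (x - m) * f x / v) ∂gaussianReal m v = 0 := by
    simpa [integral_gaussianReal_eq_integral_smul hv] using hzero
  rw [integral_sub hint' (hmul.div_const v), integral_div] at hsub
  field_simp at hsub
  linarith

section MehlerReal

variable {a b : ℝ} (x : ℝ)

lemma integral_aeval_X_mul_sub_derivative_gaussianReal (hab : a ^ 2 + b ^ 2 = 1)
    (q : Polynomial ℤ) :
    ∫ y, Polynomial.aeval (a * x + b * y) (Polynomial.X * q - Polynomial.derivative q)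
        ∂gaussianReal 0 1 =
      a * x * ∫ y, Polynomial.aeval (a * x + b * y) q ∂gaussianReal 0 1 -
        a ^ 2 * ∫ y, Polynomial.aeval (a * x + b * y) (Polynomial.derivative q)
          ∂gaussianReal 0 1 := by
  have hmem := fun r => aeval_mem_finiteMoments
    (mul_add_mul_mem_finiteMoments_gaussianReal 0 1 a b x) r
  have hint := fun r => integrable_of_mem_finiteMoments (hmem r)
  have hmul : Integrable (fun y => y * Polynomial.aeval (a * x + b * y) q) (gaussianReal 0 1) :=
    integrable_of_mem_finiteMoments (mul_mem (id_mem_finiteMoments_gaussianReal 0 1) (hmem q))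
  have hderiv : ∀ y, HasDerivAt (fun y => Polynomial.aeval (a * x + b * y) q)
      (Polynomial.aeval (a * x + b * y) (Polynomial.derivative q) * b) y := fun y =>
    HasDerivAt.comp (h₂ := fun z => Polynomial.aeval z q) y (q.hasDerivAt_aeval (a * x + b * y))
      ((hasDerivAt_const_mul b).const_add (a * x))
  have hparts : ∫ y, y * Polynomial.aeval (a * x + b * y) q ∂gaussianReal 0 1 =
      b * ∫ y, Polynomial.aeval (a * x + b * y) (Polynomial.derivative q) ∂gaussianReal 0 1 := by
    simpa [integral_mul_const, mul_comm b] using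
      integral_sub_mul_gaussianReal hderiv (hint q) ((hint _).mul_const b) (by simpa using hmul)
  simp only [map_sub, map_mul, Polynomial.aeval_X, add_mul, mul_assoc b]
  rw [integral_sub (by exact ((hint q).const_mul _).add (hmul.const_mul b)) (hint _),
    integral_add ((hint q).const_mul _) (hmul.const_mul b), integral_const_mul,
    integral_const_mul, hparts]
  linear_combination (∫ y, Polynomial.aeval (a * x + b * y) (Polynomial.derivative q)
    ∂gaussianReal 0 1) * hab

theorem integral_aeval_hermite_gaussianReal (hab : a ^ 2 + b ^ 2 = 1) (n : ℕ) :
    ∫ y, Polynomial.aeval (a * x + b * y) (Polynomial.hermite n) ∂gaussianReal 0 1 =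
      a ^ n * Polynomial.aeval x (Polynomial.hermite n) := by
  induction n using Nat.twoStepInduction with
  | zero => simp
  | one => simpa using integral_aeval_X_mul_sub_derivative_gaussianReal x hab 1
  | more n ih ih' =>
    rw [Polynomial.hermite_succ, integral_aeval_X_mul_sub_derivative_gaussianReal x hab, ih',
      derivative_hermite_succ]
    simp only [map_zsmul, map_sub, map_mul, Polynomial.aeval_X]
    simp only [zsmul_eq_mul, integral_const_mul, ih]
    ring

end MehlerReal

/-! ### The Mehler operators -/

theorem enorm_integral_pow_le_lintegral {Ω E : Type*} [MeasurableSpace Ω] [NormedAddCommGroup E]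
    [NormedSpace ℝ E] {μ : Measure Ω} [IsProbabilityMeasure μ] {p : ℝ≥0} (hp : 1 ≤ p) {f : Ω → E}
    (hf : AEStronglyMeasurable f μ) :
    ‖∫ ω, f ω ∂μ‖ₑ ^ (p : ℝ) ≤ ∫⁻ ω, ‖f ω‖ₑ ^ (p : ℝ) ∂μ := by
  have hp₀ : p ≠ 0 := (zero_lt_one.trans_le hp).ne'
  rw [← eLpNorm_nnreal_pow_eq_lintegral hp₀]
  gcongr
  calc ‖∫ ω, f ω ∂μ‖ₑ ≤ eLpNorm f 1 μ := by
        rw [eLpNorm_one_eq_lintegral_enorm]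
        exact enorm_integral_le_lintegral_enorm f
    _ ≤ eLpNorm f p μ := eLpNorm_le_eLpNorm_of_exponent_le (by exact_mod_cast hp) hf

theorem eLpNorm_integral_prod_le {α β E : Type*} [MeasurableSpace α] [MeasurableSpace β]
    [NormedAddCommGroup E] [NormedSpace ℝ E] {μ : Measure α} {ν : Measure β} [SFinite μ]
    [IsProbabilityMeasure ν] {p : ℝ≥0} (hp : 1 ≤ p) {f : α × β → E}
    (hf : AEStronglyMeasurable f (μ.prod ν)) :
    eLpNorm (fun x => ∫ y, f (x, y) ∂ν) p μ ≤ eLpNorm f p (μ.prod ν) := by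
  have hp₀ : p ≠ 0 := (zero_lt_one.trans_le hp).ne'
  rw [← ENNReal.rpow_le_rpow_iff (z := p) (by positivity), eLpNorm_nnreal_pow_eq_lintegral hp₀,
    eLpNorm_nnreal_pow_eq_lintegral hp₀, lintegral_prod _ (hf.enorm.pow_const _)]
  refine lintegral_mono_ae ?_
  filter_upwards [hf.prodMk_left] with x hx
  exact enorm_integral_pow_le_lintegral hp hx

section Mehler

variable {a b : ℝ}

theorem measurePreserving_rotation_gaussianReal (hab : a ^ 2 + b ^ 2 = 1) (v : ℝ≥0) :
    MeasurePreserving (fun z : ℝ × ℝ => a * z.1 + b * z.2)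
      ((gaussianReal 0 v).prod (gaussianReal 0 v)) (gaussianReal 0 v) := by
  refine ⟨by fun_prop, ?_⟩
  have hconv : (gaussianReal 0 v).map (a * ·) ∗ (gaussianReal 0 v).map (b * ·) =
      gaussianReal 0 v := by
    rw [gaussianReal_map_const_mul, gaussianReal_map_const_mul, gaussianReal_conv_gaussianReal]
    congr 1
    · simp
    · ext
      simp [← add_mul, hab]
  rwa [Measure.conv, Measure.map_prod_map _ _ (by fun_prop) (by fun_prop),
    Measure.map_map (by fun_prop) (by fun_prop)] at hconv

variable {k : ℕ}

instance isProbabilityMeasure_gaussMeasure : IsProbabilityMeasure (gaussMeasure k) :=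
  inferInstanceAs (IsProbabilityMeasure (Measure.pi _))

theorem measurePreserving_rotation_gaussMeasure (hab : a ^ 2 + b ^ 2 = 1) :
    MeasurePreserving (fun z : (Fin k → ℝ) × (Fin k → ℝ) => a • z.1 + b • z.2)
      ((gaussMeasure k).prod (gaussMeasure k)) (gaussMeasure k) :=
  (measurePreserving_pi (fun _ : Fin k => (gaussianReal 0 1).prod (gaussianReal 0 1))
    (fun _ => gaussianReal 0 1) fun _ => measurePreserving_rotation_gaussianReal hab 1).comp
    (measurePreserving_arrowProdEquivProdArrow ℝ ℝ (Fin k)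
      (fun _ => gaussianReal 0 1) (fun _ => gaussianReal 0 1)).symm

/-- The Mehler operator `f ↦ 𝔼 f(a x + b Y)`, with `Y` a standard Gaussian vector. For
`a = exp (-s)` and `a ^ 2 + b ^ 2 = 1` it is `exp (sL)`, an element of the Ornstein–Uhlenbeck
semigroup. -/
noncomputable def mehler (a b : ℝ) (f : (Fin k → ℝ) → ℝ) (x : Fin k → ℝ) : ℝ :=
  ∫ y, f (a • x + b • y) ∂gaussMeasure k

theorem eLpNorm_mehler_le (hab : a ^ 2 + b ^ 2 = 1) {p : ℝ≥0} (hp : 1 ≤ p)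
    {f : (Fin k → ℝ) → ℝ} (hf : AEStronglyMeasurable f (gaussMeasure k)) :
    eLpNorm (mehler a b f) p (gaussMeasure k) ≤ eLpNorm f p (gaussMeasure k) := by
  have hrot := measurePreserving_rotation_gaussMeasure (k := k) hab
  have hcontr := eLpNorm_integral_prod_le hp (hf.comp_measurePreserving hrot)
  rw [eLpNorm_comp_measurePreserving hf hrot] at hcontr
  simpa only [Function.comp_apply] using! hcontr

lemma apply_mem_finiteMoments_gaussMeasure (j : Fin k) :
    (fun x => x j) ∈ finiteMoments (gaussMeasure k) := fun q =>
  (memLp_id_gaussianReal q).comp_measurePreserving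
    (measurePreserving_eval (fun _ => gaussianReal 0 1) j)

lemma eval_mem_finiteMoments_gaussMeasure (P : MvPolynomial (Fin k) ℝ) :
    (fun x => MvPolynomial.eval x P) ∈ finiteMoments (gaussMeasure k) :=
  eval_mem_finiteMoments apply_mem_finiteMoments_gaussMeasure P

lemma integrable_eval_smul_add_smul (a b : ℝ) (x : Fin k → ℝ) (P : MvPolynomial (Fin k) ℝ) :
    Integrable (fun y => MvPolynomial.eval (a • x + b • y) P) (gaussMeasure k) := by
  have hcoord : ∀ j, (fun y : Fin k → ℝ => a * x j + b * y j) ∈ finiteMoments (gaussMeasure k) :=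
    fun j => add_mem (const_mem_finiteMoments (a * x j))
      (Subalgebra.smul_mem _ (apply_mem_finiteMoments_gaussMeasure j) b)
  exact integrable_of_mem_finiteMoments (eval_mem_finiteMoments hcoord P)

theorem eval_hermiteMv (α : Fin k →₀ ℕ) (x : Fin k → ℝ) :
    MvPolynomial.eval x (hermiteMv α) =
      ∏ j, Polynomial.aeval (x j) (Polynomial.hermite (α j)) := by
  rw [hermiteMv, map_prod]
  refine Finset.prod_congr rfl fun j _ => ?_
  have := Polynomial.aeval_algHom_apply ((MvPolynomial.aeval x : MvPolynomial (Fin k) ℝ →ₐ[ℝ] ℝ)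
    |>.restrictScalars ℤ) (MvPolynomial.X j) (Polynomial.hermite (α j))
  simpa [MvPolynomial.aeval_eq_eval] using this.symm

theorem mehler_hermiteMv (hab : a ^ 2 + b ^ 2 = 1) (α : Fin k →₀ ℕ) (x : Fin k → ℝ) :
    mehler a b (fun x => MvPolynomial.eval x (hermiteMv α)) x =
      a ^ α.degree * MvPolynomial.eval x (hermiteMv α) := by
  simp only [mehler, eval_hermiteMv, gaussMeasure, Pi.add_apply, Pi.smul_apply, smul_eq_mul]
  rw [integral_fintype_prod_eq_prod
    (fun j y => Polynomial.aeval (a * x j + b * y) (Polynomial.hermite (α j)))]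
  simp only [integral_aeval_hermite_gaussianReal _ hab, Finset.prod_mul_distrib,
    Finset.prod_pow_eq_pow_sum, Finsupp.degree_eq_sum]

theorem mehler_sum_hermiteMv (hab : a ^ 2 + b ^ 2 = 1) (S : Finset (Fin k →₀ ℕ))
    (d : (Fin k →₀ ℕ) → ℝ) (x : Fin k → ℝ) :
    mehler a b (fun x => ∑ α ∈ S, d α * MvPolynomial.eval x (hermiteMv α)) x =
      ∑ α ∈ S, a ^ α.degree * (d α * MvPolynomial.eval x (hermiteMv α)) := by
  rw [mehler, integral_finsetSum _ fun α _ =>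
    (integrable_eval_smul_add_smul a b x (hermiteMv α)).const_mul (d α)]
  refine Finset.sum_congr rfl fun α _ => ?_
  rw [integral_const_mul, mul_left_comm, ← mehler_hermiteMv hab]
  rfl

end Mehler

/-! ### Hermite polynomials as eigenfunctions of the Ornstein–Uhlenbeck operator -/

section Derivatives

variable {σ R : Type*} [CommRing R]

lemma pderiv_aeval_int (j : σ) (P : MvPolynomial σ R) (q : Polynomial ℤ) :
    MvPolynomial.pderiv j (Polynomial.aeval P q) =
      Polynomial.aeval P (Polynomial.derivative q) * MvPolynomial.pderiv j P :=
  ((MvPolynomial.pderiv (R := R) j).restrictScalars ℤ).map_aeval q P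

lemma pderiv_aeval_X_mul_prod_of_notMem {s : Finset σ} {j : σ} (hj : j ∉ s) (q : Polynomial ℤ)
    (r : σ → Polynomial ℤ) :
    MvPolynomial.pderiv j (Polynomial.aeval (MvPolynomial.X j : MvPolynomial σ R) q *
        ∏ i ∈ s, Polynomial.aeval (MvPolynomial.X i) (r i)) =
      Polynomial.aeval (MvPolynomial.X j) (Polynomial.derivative q) *
        ∏ i ∈ s, Polynomial.aeval (MvPolynomial.X i) (r i) := by
  have hprod : MvPolynomial.pderiv j
      (∏ i ∈ s, Polynomial.aeval (MvPolynomial.X i : MvPolynomial σ R) (r i)) = 0 := by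
    refine Finset.prod_induction _ (fun Q => MvPolynomial.pderiv j Q = 0) (fun Q Q' hQ hQ' => ?_)
      MvPolynomial.pderiv_one fun i hi => ?_
    · rw [Derivation.leibniz, hQ, hQ', smul_zero, smul_zero, add_zero]
    · rw [pderiv_aeval_int, MvPolynomial.pderiv_X_of_ne (ne_of_mem_of_not_mem hi hj), mul_zero]
  rw [Derivation.leibniz, hprod, pderiv_aeval_int, MvPolynomial.pderiv_X_self, smul_zero,
    zero_add, smul_eq_mul, mul_one, mul_comm]

end Derivatives

section Eigenfunctions

variable {k : ℕ}

theorem pderiv_pderiv_hermiteMv (α : Fin k →₀ ℕ) (j : Fin k) :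
    MvPolynomial.pderiv j (MvPolynomial.pderiv j (hermiteMv α)) =
      MvPolynomial.X j * MvPolynomial.pderiv j (hermiteMv α) - (α j : ℤ) • hermiteMv α := by
  rw [hermiteMv, ← Finset.mul_prod_erase _ _ (Finset.mem_univ j)]
  simp only [pderiv_aeval_X_mul_prod_of_notMem (Finset.notMem_erase j Finset.univ),
    derivative_derivative_hermite, map_sub, map_mul, map_zsmul, Polynomial.aeval_X, sub_mul,
    mul_assoc, smul_mul_assoc]

theorem OU_hermiteMv (α : Fin k →₀ ℕ) (x : Fin k → ℝ) :
    OU (hermiteMv α) x = -(α.degree * MvPolynomial.eval x (hermiteMv α)) := by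
  simp [OU, pderiv_pderiv_hermiteMv, Finset.sum_mul, Finsupp.degree_eq_sum]

lemma OU_sum_smul {ι : Type*} (S : Finset ι) (c : ι → ℝ) (P : ι → MvPolynomial (Fin k) ℝ)
    (x : Fin k → ℝ) : OU (∑ i ∈ S, c i • P i) x = ∑ i ∈ S, c i * OU (P i) x := by
  simp only [OU, map_sum, Derivation.map_smul, MvPolynomial.smul_eval, Finset.mul_sum, mul_sub,
    Finset.sum_sub_distrib, mul_left_comm (x _)]
  rw [Finset.sum_comm, Finset.sum_comm (s := Finset.univ) (t := S)]

/-- The polynomial `(-L)^a P` for `P = ∑_α c_α H_α`, where `(-L)^a H_α = |α|^a H_α`. -/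
noncomputable def negLRpow (a : ℝ) (c : (Fin k →₀ ℕ) →₀ ℝ) : MvPolynomial (Fin k) ℝ :=
  ∑ α ∈ c.support, (α.degree : ℝ) ^ a • c α • hermiteMv α

lemma hermExpansion_eq_sum_smul (c : (Fin k →₀ ℕ) →₀ ℝ) :
    hermExpansion c = ∑ α ∈ c.support, c α • hermiteMv α := by
  simp only [hermExpansion, MvPolynomial.C_mul']

theorem OU_hermExpansion (c : (Fin k →₀ ℕ) →₀ ℝ) (x : Fin k → ℝ) :
    OU (hermExpansion c) x = -MvPolynomial.eval x (negLRpow 1 c) := by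
  simp [hermExpansion_eq_sum_smul, OU_sum_smul, OU_hermiteMv, negLRpow, mul_left_comm]

theorem sqrtNegL_eq_eval_negLRpow (c : (Fin k →₀ ℕ) →₀ ℝ) (x : Fin k → ℝ) :
    sqrtNegL c x = MvPolynomial.eval x (negLRpow (1 / 2) c) := by
  simp [sqrtNegL, negLRpow, sqrt_eq_rpow, Finsupp.degree_eq_sum, mul_assoc]

end Eigenfunctions

/-! ### Polynomials in `L^p(γ_k)` -/

section PolyToLp

variable {k : ℕ}

/-- A polynomial on `ℝ^k` as an element of the Banach space `L^p(γ_k)`. -/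
noncomputable def polyToLp (p : ℝ≥0) :
    MvPolynomial (Fin k) ℝ →ₗ[ℝ] Lp ℝ p (gaussMeasure k) where
  toFun P := (eval_mem_finiteMoments_gaussMeasure P p).toLp
  map_add' P Q := by
    rw [← MemLp.toLp_add]
    simp only [map_add, Pi.add_def]
  map_smul' r P := by
    rw [RingHom.id_apply, ← MemLp.toLp_const_smul]
    simp only [MvPolynomial.smul_eval, Pi.smul_def, smul_eq_mul]

lemma norm_polyToLp (p : ℝ≥0) (P : MvPolynomial (Fin k) ℝ) :
    ‖polyToLp p P‖ = (eLpNorm (fun x => MvPolynomial.eval x P) p (gaussMeasure k)).toReal :=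
  Lp.norm_toLp _ (eval_mem_finiteMoments_gaussMeasure P p)

lemma norm_polyToLp_eq_lpNormGauss {p : ℝ≥0} (hp : p ≠ 0) (P : MvPolynomial (Fin k) ℝ) :
    ‖polyToLp p P‖ = lpNormGauss p (fun x => MvPolynomial.eval x P) := by
  have hP := (eval_mem_finiteMoments_gaussMeasure P p).aestronglyMeasurable
  rw [norm_polyToLp, toReal_eLpNorm hP, lpNorm_nnreal_eq_integral_norm_rpow hp hP, lpNormGauss,
    one_div]
  rfl

variable {p : ℝ≥0}

theorem norm_sum_pow_degree_smul_polyToLp_le (hp : 1 ≤ p) {a : ℝ} (ha : a ^ 2 ≤ 1)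
    (S : Finset (Fin k →₀ ℕ)) (d : (Fin k →₀ ℕ) → ℝ) :
    ‖∑ α ∈ S, a ^ α.degree • d α • polyToLp p (hermiteMv α)‖ ≤
      ‖∑ α ∈ S, d α • polyToLp p (hermiteMv α)‖ := by
  have hab : a ^ 2 + √(1 - a ^ 2) ^ 2 = 1 := by
    rw [sq_sqrt (sub_nonneg.2 ha), add_sub_cancel]
  simp only [← map_smul, ← map_sum, norm_polyToLp]
  have hmem := eval_mem_finiteMoments_gaussMeasure (∑ α ∈ S, d α • hermiteMv α) p
  refine ENNReal.toReal_mono hmem.eLpNorm_ne_top ?_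
  convert eLpNorm_mehler_le hab hp hmem.aestronglyMeasurable using 2
  ext x
  simp only [map_sum, MvPolynomial.smul_eval, mehler_sum_hermiteMv hab]

theorem norm_sum_exp_smul_polyToLp_le (hp : 1 ≤ p) {s : ℝ} (hs : 0 ≤ s)
    (S : Finset (Fin k →₀ ℕ)) (d : (Fin k →₀ ℕ) → ℝ) :
    ‖∑ α ∈ S, exp (-(s * α.degree)) • d α • polyToLp p (hermiteMv α)‖ ≤
      ‖∑ α ∈ S, d α • polyToLp p (hermiteMv α)‖ := by
  have hexp : exp (-s) ^ 2 ≤ 1 := pow_le_one₀ (exp_pos _).le (exp_le_one_iff.2 (by linarith))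
  convert norm_sum_pow_degree_smul_polyToLp_le hp hexp S d using 5
  rw [← exp_nat_mul]
  ring_nf

theorem norm_polyToLp_negLRpow_le (hp : 1 ≤ p) {a : ℝ} (ha₀ : 0 < a) (ha₁ : a < 1)
    (c : (Fin k →₀ ℕ) →₀ ℝ) :
    ‖polyToLp p (negLRpow a c)‖ ≤ 2 ^ (1 - a) / Gamma (2 - a) *
      ‖polyToLp p (hermExpansion c)‖ ^ (1 - a) * ‖polyToLp p (negLRpow 1 c)‖ ^ a := by
  have : Fact (1 ≤ (p : ℝ≥0∞)) := ⟨by exact_mod_cast hp⟩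
  simp only [negLRpow, hermExpansion_eq_sum_smul, map_sum, map_smul, rpow_one]
  refine norm_sum_rpow_smul_le c.support (fun α => c α • polyToLp p (hermiteMv α))
    (fun α => (α.degree : ℝ)) ha₀ ha₁ (fun α => α.degree.cast_nonneg)
    (fun s hs => norm_sum_exp_smul_polyToLp_le hp hs _ c) fun s hs => ?_
  simpa only [smul_smul] using
    norm_sum_exp_smul_polyToLp_le hp hs c.support fun α => α.degree * c α

end PolyToLp

lemma lpNormGauss_nonneg {k : ℕ} (p : ℝ) (f : (Fin k → ℝ) → ℝ) : 0 ≤ lpNormGauss p f :=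
  rpow_nonneg (integral_nonneg fun _ => rpow_nonneg (abs_nonneg _) _) _

lemma two_rpow_half_div_Gamma_le_two : (2 : ℝ) ^ (1 / 2 : ℝ) / Gamma (2 - 1 / 2) ≤ 2 := by
  have hΓ : Gamma (2 - 1 / 2) = √π / 2 := by
    rw [show (2 - 1 / 2 : ℝ) = 1 / 2 + 1 by norm_num, Gamma_add_one (by norm_num),
      Gamma_one_half_eq, one_div_mul_eq_div]
  rw [hΓ, ← sqrt_eq_rpow, div_le_iff₀ (by positivity), mul_div_cancel₀ _ two_ne_zero]
  exact sqrt_le_sqrt two_le_pi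

theorem sqrt_L_interpolation_general {p : ℝ} (hp : 1 ≤ p) {a : ℝ} (ha₀ : 0 < a) (ha₁ : a < 1)
    {k : ℕ} (c : (Fin k →₀ ℕ) →₀ ℝ) :
    lpNormGauss p (fun x => MvPolynomial.eval x (negLRpow a c)) ≤
      2 ^ (1 - a) / Gamma (2 - a) *
        (lpNormGauss p fun x => MvPolynomial.eval x (hermExpansion c)) ^ (1 - a) *
        lpNormGauss p (OU (hermExpansion c)) ^ a := by
  have hOU : lpNormGauss p (OU (hermExpansion c)) =
      lpNormGauss p fun x => MvPolynomial.eval x (negLRpow 1 c) := by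
    simp only [lpNormGauss, OU_hermExpansion, abs_neg]
  lift p to ℝ≥0 using zero_le_one.trans hp
  replace hp : 1 ≤ p := mod_cast hp
  have hp₀ : p ≠ 0 := (zero_lt_one.trans_le hp).ne'
  simpa only [hOU, ← norm_polyToLp_eq_lpNormGauss hp₀] using norm_polyToLp_negLRpow_le hp ha₀ ha₁ c

/-- `‖(-L)^{1/2} P‖_p ≤ 2 ‖P‖_p^{1/2} ‖LP‖_p^{1/2}`. -/
theorem sqrt_L_interpolation (p : ℝ) (hp : 1 ≤ p) (k : ℕ) (hk : 1 ≤ k)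
    (c : (Fin k →₀ ℕ) →₀ ℝ) :
    lpNormGauss p (sqrtNegL c) ≤
      2 * (lpNormGauss p (fun x => MvPolynomial.eval x (hermExpansion c))) ^ ((1 : ℝ) / 2) *
        (lpNormGauss p (OU (hermExpansion c))) ^ ((1 : ℝ) / 2) := by
  rw [funext (sqrtNegL_eq_eval_negLRpow c)]
  refine (sqrt_L_interpolation_general hp one_half_pos one_half_lt_one c).trans ?_
  rw [show (1 - 1 / 2 : ℝ) = 1 / 2 by norm_num]
  gcongr
  exacts [rpow_nonneg (lpNormGauss_nonneg _ _) _, rpow_nonneg (lpNormGauss_nonneg _ _) _,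
    two_rpow_half_div_Gamma_le_two]
end
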